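/- arXiv:1302.4106 — 2 statements merged into one kernel-verified Lean document; each statement's English description precedes it below -/
import Mathlib

section
/- Lemma 3.2: Let Ω ⊆ ℂⁿ be an open convex set, let K ⊆ ℂⁿ be a compact convex set disjoint from the closure of Ω, let P be a holomorphic polynomial on ℂⁿ, let 0 < δ < ∞ and ε > 0, and let F be a finite set of multi-indices in ℕⁿ. Then there exists a holomorphic polynomial Q on ℂⁿ such that sup_{z ∈ K} ‖Q(z) − P(z)‖ < ε and sup_{z ∈ closure(Ω) ∩ {z : ‖z‖ ≤ δ}} ‖(D^ℓ Q)(z)‖ < ε for all ℓ ∈ F. -/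
open Set Filter Topology

noncomputable section

/-- Evaluation of a multivariate polynomial as a function on `ℂⁿ = Fin n → ℂ`. -/
def mvEval {n : ℕ} (p : MvPolynomial (Fin n) ℂ) : (Fin n → ℂ) → ℂ :=
  fun z => MvPolynomial.eval z p

/-- The polynomially convex hull of a set in `ℂⁿ`. -/
def polyHull {n : ℕ} (K : Set (Fin n → ℂ)) : Set (Fin n → ℂ) :=
  {z | ∀ p : MvPolynomial (Fin n) ℂ, ‖mvEval p z‖ ≤ sSup ((fun w => ‖mvEval p w‖) '' K)}

/-- A set in `ℂⁿ` is polynomially convex if it equals its polynomially convex hull. -/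
def IsPolyConvex {n : ℕ} (K : Set (Fin n → ℂ)) : Prop := polyHull K = K

/-- The polynomially convex hull of a subset of `ℂ`. -/
def polyHull1 (F : Set ℂ) : Set ℂ :=
  {z | ∀ p : Polynomial ℂ, ‖p.eval z‖ ≤ sSup ((fun w => ‖p.eval w‖) '' F)}

/-- A subset of `ℂ` is polynomially convex if it equals its polynomially convex hull. -/
def IsPolyConvex1 (F : Set ℂ) : Prop := polyHull1 F = F

/-- Partial derivative in the `i`-th coordinate direction. -/
def pd {n : ℕ} (i : Fin n) (f : (Fin n → ℂ) → ℂ) : (Fin n → ℂ) → ℂ :=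
  fun z => fderiv ℂ f z (Pi.single i 1)

/-- Iterated partial derivative `D^ℓ = ∂^{ℓ₁+⋯+ℓₙ}/∂z₁^{ℓ₁}⋯∂zₙ^{ℓₙ}`. -/
def Dml {n : ℕ} (ℓ : Fin n → ℕ) (f : (Fin n → ℂ) → ℂ) : (Fin n → ℂ) → ℂ :=
  (List.finRange n).foldr (fun i g => (pd i)^[ℓ i] g) f

/-- Partial sums `S_λ` of a Taylor-type series around `ζ`, with coefficients computed from a
given family `g` of (extended) partial derivatives: the coefficient of the monomial
`(z-ζ)^{N_j}` is `g (N_j) ζ / (N_{j,1}! ⋯ N_{j,n}!)`. -/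
def pSumExt {n : ℕ} (Nj : ℕ → Fin n → ℕ) (g : (Fin n → ℕ) → (Fin n → ℂ) → ℂ)
    (ζ : Fin n → ℂ) (lam : ℕ) : (Fin n → ℂ) → ℂ :=
  fun z => ∑ j ∈ Finset.range (lam + 1),
    (((∏ i, Nat.factorial (Nj j i) : ℕ) : ℂ))⁻¹ * g (Nj j) ζ * ∏ i, (z i - ζ i) ^ (Nj j i)

/-- Partial sums `S_λ(f,ζ)` of the Taylor development of `f` around `ζ`. -/
def pSum {n : ℕ} (Nj : ℕ → Fin n → ℕ) (f : (Fin n → ℂ) → ℂ)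
    (ζ : Fin n → ℂ) (lam : ℕ) : (Fin n → ℂ) → ℂ :=
  pSumExt Nj (fun ℓ => Dml ℓ f) ζ lam

/-- The space `O(Ω)` of holomorphic functions on `Ω`. -/
def Ospace (n : ℕ) (Ω : Set (Fin n → ℂ)) : Type :=
  {f : (Fin n → ℂ) → ℂ // DifferentiableOn ℂ f Ω}

/-- Topology of uniform convergence on compact subsets of `Ω` on `O(Ω)` (the compact-open
topology induced via restriction to `Ω`). -/
instance (n : ℕ) (Ω : Set (Fin n → ℂ)) : TopologicalSpace (Ospace n Ω) :=
  TopologicalSpace.induced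
    (fun f : Ospace n Ω =>
      (⟨Ω.restrict f.1, continuousOn_iff_continuous_restrict.mp f.2.continuousOn⟩ : C(Ω, ℂ)))
    inferInstance

/-- Membership in `A^∞(Ω)`: `f` is holomorphic on `Ω` and each partial derivative `D^ℓ f`
extends continuously to the closure of `Ω`. -/
def AinfMem (n : ℕ) (Ω : Set (Fin n → ℂ)) (f : (Fin n → ℂ) → ℂ) : Prop :=
  DifferentiableOn ℂ f Ω ∧
    ∀ ℓ : Fin n → ℕ, ∃ g : (Fin n → ℂ) → ℂ,
      ContinuousOn g (closure Ω) ∧ Set.EqOn g (Dml ℓ f) Ω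

/-- The space `A^∞(Ω)`. -/
def AinfSpace (n : ℕ) (Ω : Set (Fin n → ℂ)) : Type :=
  {f : (Fin n → ℂ) → ℂ // AinfMem n Ω f}

/-- The chosen continuous extension of `D^ℓ f` to the closure of `Ω`, for `f ∈ A^∞(Ω)`.
(Its restriction to the closure of `Ω` is uniquely determined.) -/
def AinfExt {n : ℕ} {Ω : Set (Fin n → ℂ)} (f : AinfSpace n Ω) (ℓ : Fin n → ℕ) :
    (Fin n → ℂ) → ℂ :=
  Classical.choose (f.2.2 ℓ)

lemma AinfExt_continuousOn {n : ℕ} {Ω : Set (Fin n → ℂ)} (f : AinfSpace n Ω) (ℓ : Fin n → ℕ) :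
    ContinuousOn (AinfExt f ℓ) (closure Ω) :=
  (Classical.choose_spec (f.2.2 ℓ)).1

lemma AinfExt_eqOn {n : ℕ} {Ω : Set (Fin n → ℂ)} (f : AinfSpace n Ω) (ℓ : Fin n → ℕ) :
    Set.EqOn (AinfExt f ℓ) (Dml ℓ f.1) Ω :=
  (Classical.choose_spec (f.2.2 ℓ)).2

/-- Topology on `A^∞(Ω)`: uniform convergence of every partial derivative on every compact
subset of the closure of `Ω`. -/
instance (n : ℕ) (Ω : Set (Fin n → ℂ)) : TopologicalSpace (AinfSpace n Ω) :=
  TopologicalSpace.induced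
    (fun f : AinfSpace n Ω => fun ℓ : Fin n → ℕ =>
      (⟨(closure Ω).restrict (AinfExt f ℓ),
        continuousOn_iff_continuous_restrict.mp (AinfExt_continuousOn f ℓ)⟩ :
          C(closure Ω, ℂ)))
    inferInstance

/-- A smooth compact curve in `ℂⁿ`: the image of an injective `C^∞` map with
nowhere-vanishing derivative, defined on a compact interval (an arc) or on the
circle (a closed curve, modelled by a 1-periodic map). -/
def IsSmoothCompactCurve {n : ℕ} (K : Set (Fin n → ℂ)) : Prop :=
  ∃ γ : ℝ → (Fin n → ℂ), ContDiff ℝ (⊤ : ℕ∞) γ ∧ (∀ t, deriv γ t ≠ 0) ∧ K = γ '' Set.Icc 0 1 ∧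
    (Set.InjOn γ (Set.Icc 0 1) ∨ (Function.Periodic γ 1 ∧ Set.InjOn γ (Set.Ico 0 1)))

/-- A disjoint union of finitely many smooth compact curves. -/
def IsFiniteUnionOfSmoothCurves {n : ℕ} (K : Set (Fin n → ℂ)) : Prop :=
  ∃ (m : ℕ) (C : Fin m → Set (Fin n → ℂ)),
    (∀ i, IsSmoothCompactCurve (C i)) ∧ Pairwise (Function.onFun Disjoint C) ∧ K = ⋃ i, C i

/-!
A complex-affine `s` with `0 < re s` on `K` and `re s < 0` on a neighbourhood of the compact convex
set `L` reduces the problem to one variable: if a polynomial `q` is close to `1` on `s(K)` and close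
to `0` on `s(L)`, then `P * q(s)` is close to `P` on `K` and close to `0` near `L`, hence has small
derivatives on `L` by Cauchy's estimates. The polynomial `q` comes from Runge's theorem applied to
the rational functions `(1 + w) ^ N / ((1 + w) ^ N + (1 - w) ^ N)`: they have all their poles on the
imaginary axis, which lies in the unbounded component of the complement of `s(K) ∪ s(L)`.
-/

section Runge

lemma isUnit_aeval_of_unbounded_connectedComponentIn {A : Type*} [NormedRing A]
    [NormedAlgebra ℂ A] [CompleteSpace A] [Nontrivial A] (S : Subalgebra ℂ A)
    [hS : IsClosed (S : Set A)] (x : S) {q : Polynomial ℂ}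
    (hq : ∀ k, q.eval k = 0 →
      ¬ Bornology.IsBounded (connectedComponentIn (spectrum ℂ (x : A))ᶜ k)) :
    IsUnit (Polynomial.aeval x q) := by
  have : CompleteSpace S := hS.completeSpace_coe
  rw [← spectrum.zero_notMem_iff ℂ,
    spectrum.map_polynomial_aeval_of_nonempty x q (spectrum.nonempty x)]
  rintro ⟨k, hk, hk0⟩
  exact hq k hk0 (Subalgebra.spectrum_isBounded_connectedComponentIn S x hk)

/-- **Runge's theorem**: in the closure of the polynomials in `C(T, ℂ)`, the spectrum of the
coordinate exceeds `T` only by bounded components of `Tᶜ`, so `q` becomes invertible there. -/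
theorem exists_polynomial_near_div {T : Set ℂ} (hT : IsCompact T) (p : Polynomial ℂ)
    {q : Polynomial ℂ}
    (hq : ∀ k, q.eval k = 0 → ¬ Bornology.IsBounded (connectedComponentIn Tᶜ k))
    {ε : ℝ} (hε : 0 < ε) :
    ∃ g : Polynomial ℂ, ∀ z ∈ T, ‖g.eval z - p.eval z / q.eval z‖ < ε := by
  rcases T.eq_empty_or_nonempty with rfl | hne
  · exact ⟨0, by simp⟩
  have : CompactSpace T := isCompact_iff_compactSpace.1 hT
  have : Nonempty T := hne.to_subtype
  let S := (polynomialFunctions T).topologicalClosure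
  have : IsClosed (S : Set C(T, ℂ)) := Subalgebra.isClosed_topologicalClosure _
  let x : S := ⟨Polynomial.X.toContinuousMapOn T,
    Subalgebra.le_topologicalClosure _ ⟨Polynomial.X, trivial, rfl⟩⟩
  have hx : spectrum ℂ (x : C(T, ℂ)) = T := by
    rw [ContinuousMap.spectrum_eq_range]
    simp [x, Set.range]
  have eval_aeval (r : Polynomial ℂ) (z : T) :
      (Polynomial.aeval x r : C(T, ℂ)) z = r.eval (z : ℂ) := by
    rw [← Subalgebra.coe_val, ← Polynomial.aeval_algHom_apply,
      Polynomial.aeval_continuousMap_apply]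
    simp [x]
  obtain ⟨v, hv⟩ : ∃ v : S, Polynomial.aeval x q * v = 1 :=
    (isUnit_aeval_of_unbounded_connectedComponentIn S x (by rwa [hx])).exists_right_inv
  have hv_apply (z : T) : q.eval (z : ℂ) * (v : C(T, ℂ)) z = 1 := by
    rw [← eval_aeval]
    exact congrArg (fun h : S ↦ (h : C(T, ℂ)) z) hv
  obtain ⟨_, ⟨g, -, rfl⟩, hg⟩ :=
    Metric.mem_closure_iff.1 (Polynomial.aeval x p * v : S).2 ε hε
  refine ⟨g, fun z hz ↦ ?_⟩
  have hgz := (ContinuousMap.dist_lt_iff hε).1 hg ⟨z, hz⟩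
  rw [dist_comm, dist_eq_norm] at hgz
  simpa [eval_aeval, div_eq_mul_inv, eq_inv_of_mul_eq_one_right (hv_apply ⟨z, hz⟩)] using hgz

end Runge

section HalfPlaneStep

lemma tendstoUniformlyOn_pow_zero {X R : Type*} [TopologicalSpace X] [SeminormedRing R]
    [NormOneClass R] {f : X → R} {T : Set X} (hT : IsCompact T) (hf : ContinuousOn f T)
    (hlt : ∀ x ∈ T, ‖f x‖ < 1) :
    TendstoUniformlyOn (fun (N : ℕ) x ↦ f x ^ N) (fun _ ↦ 0) atTop T := by
  rcases T.eq_empty_or_nonempty with rfl | hne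
  · exact tendstoUniformlyOn_empty
  obtain ⟨x₀, hx₀, hmax⟩ := hT.exists_isMaxOn hne hf.norm
  have hlim := tendsto_pow_atTop_nhds_zero_of_lt_one (norm_nonneg (f x₀)) (hlt x₀ hx₀)
  rw [Metric.tendstoUniformlyOn_iff]
  intro ε hε
  filter_upwards [hlim.eventually_lt_const hε] with N hN x hx
  rw [dist_zero_left]
  calc ‖f x ^ N‖ ≤ ‖f x‖ ^ N := norm_pow_le _ _
    _ ≤ ‖f x₀‖ ^ N := by gcongr; exact hmax hx
    _ < ε := hN

lemma norm_one_add_sq_sub_norm_one_sub_sq (w : ℂ) : ‖1 + w‖ ^ 2 - ‖1 - w‖ ^ 2 = 4 * w.re := by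
  simp only [← Complex.normSq_eq_norm_sq, Complex.normSq_apply, Complex.add_re, Complex.add_im,
    Complex.sub_re, Complex.sub_im, Complex.one_re, Complex.one_im]
  ring

lemma norm_one_sub_lt_norm_one_add_iff {w : ℂ} : ‖1 - w‖ < ‖1 + w‖ ↔ 0 < w.re := by
  rw [← sq_lt_sq₀ (norm_nonneg _) (norm_nonneg _), ← sub_pos,
    norm_one_add_sq_sub_norm_one_sub_sq]
  simp

lemma norm_one_add_lt_norm_one_sub_iff {w : ℂ} : ‖1 + w‖ < ‖1 - w‖ ↔ w.re < 0 := by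
  simpa [← sub_eq_add_neg] using norm_one_sub_lt_norm_one_add_iff (w := -w)

lemma re_eq_zero_of_one_add_pow_add_one_sub_pow_eq_zero {N : ℕ} (hN : N ≠ 0) {w : ℂ}
    (hw : (1 + w) ^ N + (1 - w) ^ N = 0) : w.re = 0 := by
  have hpow : ‖1 + w‖ ^ N = ‖1 - w‖ ^ N := by
    rw [← norm_pow, eq_neg_of_add_eq_zero_left hw, norm_neg, norm_pow]
  have hnorm : ‖1 + w‖ = ‖1 - w‖ := (pow_left_inj₀ (norm_nonneg _) (norm_nonneg _) hN).1 hpow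
  have := norm_one_add_sq_sub_norm_one_sub_sq w
  rw [hnorm] at this
  linarith

/-- Rational approximation of the indicator function of the right half-plane: under the Cayley
transform `c = (1 - w) / (1 + w)` it is `1 / (1 + c ^ N)`. For `N ≠ 0` all its poles lie on the
imaginary axis. -/
def halfPlaneStep (N : ℕ) (w : ℂ) : ℂ := (1 + w) ^ N / ((1 + w) ^ N + (1 - w) ^ N)

lemma tendstoUniformlyOn_halfPlaneStep_one {A : Set ℂ} (hA : IsCompact A)
    (hre : ∀ z ∈ A, 0 < z.re) :
    TendstoUniformlyOn halfPlaneStep (fun _ ↦ 1) atTop A := by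
  have hlt : ∀ w ∈ A, ‖1 - w‖ < ‖1 + w‖ := fun w hw ↦
    norm_one_sub_lt_norm_one_add_iff.2 (hre w hw)
  have hne : ∀ w ∈ A, 1 + w ≠ 0 := fun w hw ↦
    norm_pos_iff.1 ((norm_nonneg _).trans_lt (hlt w hw))
  have hpow := tendstoUniformlyOn_pow_zero hA (f := fun w ↦ (1 - w) / (1 + w))
    (ContinuousOn.div (by fun_prop) (by fun_prop) hne) fun w hw ↦ by
      rw [norm_div]
      exact (div_lt_one (norm_pos_iff.2 (hne w hw))).2 (hlt w hw)
  have hcont : Tendsto (fun u : ℂ ↦ 1 / (1 + u)) (𝓝 0) (𝓝 1) := by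
    have : ContinuousAt (fun u : ℂ ↦ 1 / (1 + u)) 0 := by fun_prop (disch := simp)
    simpa [ContinuousAt] using this
  have hlim : TendstoUniformlyOn (fun (N : ℕ) w ↦ 1 / (1 + ((1 - w) / (1 + w)) ^ N)) (fun _ ↦ 1)
      atTop A :=
    tendsto_prod_principal_iff.1 (hcont.comp (tendsto_prod_principal_iff.2 hpow))
  refine hlim.congr (.of_forall fun N w hw ↦ ?_)
  have := pow_ne_zero N (hne w hw)
  simp only [halfPlaneStep, div_pow]
  field_simp

lemma halfPlaneStep_neg {N : ℕ} (hN : N ≠ 0) {w : ℂ} (hw : w.re ≠ 0) :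
    halfPlaneStep N (-w) = 1 - halfPlaneStep N w := by
  have hden : (1 + w) ^ N + (1 - w) ^ N ≠ 0 :=
    mt (re_eq_zero_of_one_add_pow_add_one_sub_pow_eq_zero hN) hw
  rw [halfPlaneStep, halfPlaneStep, eq_sub_iff_add_eq, sub_neg_eq_add, ← sub_eq_add_neg,
    add_comm ((1 - w) ^ N), ← add_div, add_comm ((1 - w) ^ N), div_self hden]

lemma tendstoUniformlyOn_halfPlaneStep_zero {B : Set ℂ} (hB : IsCompact B)
    (hre : ∀ z ∈ B, z.re < 0) :
    TendstoUniformlyOn halfPlaneStep (fun _ ↦ 0) atTop B := by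
  have hneg := tendstoUniformlyOn_halfPlaneStep_one hB.neg fun z hz ↦ by
    simpa using hre (-z) hz
  rw [Metric.tendstoUniformlyOn_iff] at hneg ⊢
  intro ε hε
  filter_upwards [hneg ε hε, eventually_ne_atTop 0] with N hN hN0 w hw
  have := hN (-w) (by simpa using hw)
  simpa [halfPlaneStep_neg hN0 (hre w hw).ne, dist_eq_norm] using this

end HalfPlaneStep

section OneVariable

lemma not_isBounded_setOf_re_eq_zero : ¬ Bornology.IsBounded {z : ℂ | z.re = 0} := by
  intro h
  have him : Complex.imCLM '' {z : ℂ | z.re = 0} = Set.univ :=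
    Set.eq_univ_of_forall fun y ↦ ⟨⟨0, y⟩, rfl, rfl⟩
  exact NormedSpace.unbounded_univ ℝ ℝ (him ▸ Complex.imCLM.lipschitz.isBounded_image h)

lemma isPreconnected_setOf_re_eq_zero : IsPreconnected {z : ℂ | z.re = 0} :=
  ((convex_singleton (0 : ℝ)).linear_preimage Complex.reLm).isPreconnected

lemma exists_polynomial_near_halfPlaneStep {T : Set ℂ} (hT : IsCompact T)
    (hre : ∀ z ∈ T, z.re ≠ 0) {N : ℕ} (hN : N ≠ 0) {ε : ℝ} (hε : 0 < ε) :
    ∃ q : Polynomial ℂ, ∀ z ∈ T, ‖q.eval z - halfPlaneStep N z‖ < ε := by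
  have hpoles (k : ℂ) (hk : ((1 + .X) ^ N + (1 - .X) ^ N : Polynomial ℂ).eval k = 0) :
      ¬ Bornology.IsBounded (connectedComponentIn Tᶜ k) := by
    have hk_re : k.re = 0 :=
      re_eq_zero_of_one_add_pow_add_one_sub_pow_eq_zero hN (by simpa using hk)
    have hsub := isPreconnected_setOf_re_eq_zero.subset_connectedComponentIn hk_re
      (fun z hz hzT ↦ hre z hzT hz : {z : ℂ | z.re = 0} ⊆ Tᶜ)
    exact fun hbdd ↦ not_isBounded_setOf_re_eq_zero (hbdd.subset hsub)
  simpa [halfPlaneStep] using exists_polynomial_near_div hT ((1 + .X) ^ N) hpoles hε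

theorem exists_polynomial_near_one_near_zero {A B : Set ℂ} (hA : IsCompact A) (hB : IsCompact B)
    (hA_re : ∀ z ∈ A, 0 < z.re) (hB_re : ∀ z ∈ B, z.re < 0) {ε : ℝ} (hε : 0 < ε) :
    ∃ q : Polynomial ℂ, (∀ z ∈ A, ‖q.eval z - 1‖ < ε) ∧ ∀ z ∈ B, ‖q.eval z‖ < ε := by
  have hone := Metric.tendstoUniformlyOn_iff.1 (tendstoUniformlyOn_halfPlaneStep_one hA hA_re)
  have hzero := Metric.tendstoUniformlyOn_iff.1 (tendstoUniformlyOn_halfPlaneStep_zero hB hB_re)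
  obtain ⟨N, ⟨hNA, hNB⟩, hN⟩ :=
    (((hone _ (half_pos hε)).and (hzero _ (half_pos hε))).and (eventually_ne_atTop 0)).exists
  obtain ⟨q, hq⟩ := exists_polynomial_near_halfPlaneStep (hA.union hB)
    (by rintro z (hz | hz); exacts [(hA_re z hz).ne', (hB_re z hz).ne]) hN (half_pos hε)
  have eval_near {c z : ℂ} (hz : z ∈ A ∪ B) (hc : dist c (halfPlaneStep N z) < ε / 2) :
      ‖q.eval z - c‖ < ε :=
    calc ‖q.eval z - c‖ = dist (q.eval z) c := (dist_eq_norm _ _).symm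
      _ ≤ dist (q.eval z) (halfPlaneStep N z) + dist c (halfPlaneStep N z) :=
          dist_triangle_right _ _ _
      _ < ε / 2 + ε / 2 := add_lt_add (by simpa [dist_eq_norm] using hq z hz) hc
      _ = ε := add_halves ε
  exact ⟨q, fun z hz ↦ eval_near (.inl hz) (hNA z hz),
    fun z hz ↦ by simpa using eval_near (.inr hz) (hNB z hz)⟩

end OneVariable

section SeveralVariables

variable {n : ℕ}

lemma analyticOnNhd_mvEval (p : MvPolynomial (Fin n) ℂ) (U : Set (Fin n → ℂ)) :
    AnalyticOnNhd ℂ (mvEval p) U :=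
  (AnalyticOnNhd.eval_mvPolynomial p).mono (subset_univ U)

lemma continuous_mvEval (p : MvPolynomial (Fin n) ℂ) : Continuous (mvEval p) :=
  MvPolynomial.continuous_eval p

lemma exists_mvEval_eq_linearMap (f : (Fin n → ℂ) →ₗ[ℂ] ℂ) :
    ∃ p : MvPolynomial (Fin n) ℂ, mvEval p = f :=
  ⟨∑ i, MvPolynomial.C (f fun j ↦ if i = j then 1 else 0) * MvPolynomial.X i, by
    ext z
    simp [mvEval, f.pi_apply_eq_sum_univ z, mul_comm]⟩

theorem exists_mvPolynomial_re_separating {K L : Set (Fin n → ℂ)} (hK : IsCompact K)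
    (hKcv : Convex ℝ K) (hL : IsClosed L) (hLcv : Convex ℝ L) (hKL : Disjoint K L) :
    ∃ s : MvPolynomial (Fin n) ℂ,
      (∀ z ∈ K, 0 < (mvEval s z).re) ∧ ∀ z ∈ L, (mvEval s z).re < 0 := by
  obtain ⟨f, u, v, hfL, huv, hfK⟩ :=
    RCLike.geometric_hahn_banach_closed_compact (𝕜 := ℂ) hLcv hL hKcv hK hKL.symm
  obtain ⟨p, hp⟩ := exists_mvEval_eq_linearMap (f : (Fin n → ℂ) →ₗ[ℂ] ℂ)
  have heval (z) : (mvEval (p - MvPolynomial.C (u : ℂ)) z).re = (f z).re - u := by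
    have := congrFun hp z
    simp_all [mvEval]
  exact ⟨p - MvPolynomial.C (u : ℂ), fun z hz ↦ heval z ▸ sub_pos.2 (huv.trans (hfK z hz)),
    fun z hz ↦ heval z ▸ sub_neg.2 (hfL z hz)⟩

theorem exists_mvPolynomial_near_near_zero {K L : Set (Fin n → ℂ)} (hK : IsCompact K)
    (hL : IsCompact L) {s : MvPolynomial (Fin n) ℂ} (hsK : ∀ z ∈ K, 0 < (mvEval s z).re)
    (hsL : ∀ z ∈ L, (mvEval s z).re < 0) (P : MvPolynomial (Fin n) ℂ) {ε : ℝ} (hε : 0 < ε) :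
    ∃ Q : MvPolynomial (Fin n) ℂ,
      (∀ z ∈ K, ‖mvEval Q z - mvEval P z‖ < ε) ∧ ∀ z ∈ L, ‖mvEval Q z‖ < ε := by
  obtain ⟨M, hM, hPM⟩ : ∃ M > 0, ∀ z ∈ K ∪ L, ‖mvEval P z‖ ≤ M := by
    obtain ⟨M, hM⟩ := (hK.union hL).exists_bound_of_continuousOn (continuous_mvEval P).continuousOn
    exact ⟨max M 1, by positivity, fun z hz ↦ (hM z hz).trans (le_max_left _ _)⟩
  obtain ⟨q, hqK, hqL⟩ := exists_polynomial_near_one_near_zero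
    (hK.image (continuous_mvEval s)) (hL.image (continuous_mvEval s))
    (forall_mem_image.2 hsK) (forall_mem_image.2 hsL) (div_pos hε hM)
  have heval (z) : mvEval (P * Polynomial.aeval s q) z = mvEval P z * q.eval (mvEval s z) := by
    have := Polynomial.aeval_algHom_apply (MvPolynomial.aeval z) s q
    simp_all [mvEval]
  have mul_lt {a b : ℂ} (ha : ‖a‖ ≤ M) (hb : ‖b‖ < ε / M) : ‖a * b‖ < ε := by
    rw [norm_mul]
    calc ‖a‖ * ‖b‖ ≤ M * ‖b‖ := by gcongr
      _ < ε := (lt_div_iff₀' hM).1 hb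
  refine ⟨P * Polynomial.aeval s q, fun z hz ↦ ?_, fun z hz ↦ ?_⟩
  · rw [heval, ← mul_sub_one]
    exact mul_lt (hPM z (.inl hz)) (hqK _ (mem_image_of_mem _ hz))
  · rw [heval]
    exact mul_lt (hPM z (.inr hz)) (hqL _ (mem_image_of_mem _ hz))

end SeveralVariables

section CauchyEstimates

variable {n : ℕ}

/-- `T` satisfies Cauchy's estimates for a differential operator of order `k`: a bound on `f` over
the closed polydisc of radius `k * r` about `z` controls `T f z`. Radii add up along compositions,
which is why they are measured in units of the order. -/
def SatisfiesCauchyEstimates (T : ((Fin n → ℂ) → ℂ) → (Fin n → ℂ) → ℂ) (k : ℕ) : Prop :=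
  ∀ ⦃f : (Fin n → ℂ) → ℂ⦄ ⦃z : Fin n → ℂ⦄ ⦃r M : ℝ⦄, 0 < r →
    AnalyticOnNhd ℂ f (Metric.closedBall z (k * r)) →
    (∀ w ∈ Metric.closedBall z (k * r), ‖f w‖ ≤ M) →
    AnalyticAt ℂ (T f) z ∧ ‖T f z‖ ≤ (2 / r) ^ k * M

lemma satisfiesCauchyEstimates_id : SatisfiesCauchyEstimates (n := n) (fun f ↦ f) 0 :=
  fun _ z _ _ _ hf hM ↦ ⟨hf z (by simp), by simpa using hM z (by simp)⟩

lemma SatisfiesCauchyEstimates.comp {T U : ((Fin n → ℂ) → ℂ) → (Fin n → ℂ) → ℂ} {j k : ℕ}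
    (hT : SatisfiesCauchyEstimates T j) (hU : SatisfiesCauchyEstimates U k) :
    SatisfiesCauchyEstimates (fun f ↦ T (U f)) (j + k) := by
  intro f z r M hr hf hM
  have hU_apply : ∀ w ∈ Metric.closedBall z (j * r),
      AnalyticAt ℂ (U f) w ∧ ‖U f w‖ ≤ (2 / r) ^ k * M := by
    intro w hw
    have hsub : Metric.closedBall w (k * r) ⊆ Metric.closedBall z (↑(j + k) * r) :=
      Metric.closedBall_subset_closedBall' (by
        have := Metric.mem_closedBall.1 hw
        push_cast
        linarith)
    exact hU hr (hf.mono hsub) fun y hy ↦ hM y (hsub hy)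
  rw [pow_add, mul_assoc]
  exact hT hr (fun w hw ↦ (hU_apply w hw).1) fun w hw ↦ (hU_apply w hw).2

lemma satisfiesCauchyEstimates_pd (i : Fin n) : SatisfiesCauchyEstimates (pd i) 1 := by
  intro f z r M hr hf hM
  simp only [Nat.cast_one, one_mul, pow_one] at hf hM ⊢
  have hz : z ∈ Metric.closedBall z r := Metric.mem_closedBall_self hr.le
  have hanalytic : AnalyticAt ℂ (pd i f) z :=
    ((ContinuousLinearMap.apply ℂ ℂ (Pi.single i 1 : Fin n → ℂ)).analyticAt _).comp
      (hf z hz).fderiv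
  refine ⟨hanalytic, ?_⟩
  have hmaps : MapsTo f (Metric.ball z r) (Metric.closedBall (f z) (M + M)) := fun w hw ↦ by
    rw [mem_closedBall_iff_norm]
    exact norm_sub_le_of_le (hM w (Metric.ball_subset_closedBall hw)) (hM z hz)
  have hfderiv : ‖fderiv ℂ f z‖ ≤ (M + M) / r := Complex.norm_fderiv_le_div_of_mapsTo_ball
    (hf.differentiableOn.mono Metric.ball_subset_closedBall) hmaps hr
  calc ‖pd i f z‖ ≤ ‖fderiv ℂ f z‖ * ‖(Pi.single i 1 : Fin n → ℂ)‖ :=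
        (fderiv ℂ f z).le_opNorm _
    _ = ‖fderiv ℂ f z‖ := by simp [Pi.norm_single]
    _ ≤ 2 / r * M := hfderiv.trans_eq (by ring)

lemma SatisfiesCauchyEstimates.iterate {T : ((Fin n → ℂ) → ℂ) → (Fin n → ℂ) → ℂ}
    (hT : SatisfiesCauchyEstimates T 1) : ∀ k, SatisfiesCauchyEstimates T^[k] k
  | 0 => satisfiesCauchyEstimates_id
  | k + 1 => (hT.iterate k).comp hT

lemma satisfiesCauchyEstimates_Dml (ℓ : Fin n → ℕ) :
    SatisfiesCauchyEstimates (Dml ℓ) (∑ i, ℓ i) := by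
  have hlist (l : List (Fin n)) : SatisfiesCauchyEstimates
      (fun f ↦ l.foldr (fun i g ↦ (pd i)^[ℓ i] g) f) (l.map ℓ).sum := by
    induction l with
    | nil => exact satisfiesCauchyEstimates_id
    | cons i l ih => exact ((satisfiesCauchyEstimates_pd i).iterate (ℓ i)).comp ih
  rw [← List.sum_ofFn, List.ofFn_eq_map]
  exact hlist (List.finRange n)

theorem exists_pos_forall_norm_Dml_lt (F : Finset (Fin n → ℕ)) {r ε : ℝ} (hr : 0 < r)
    (hε : 0 < ε) :
    ∃ η > 0, ∀ (f : (Fin n → ℂ) → ℂ) (z : Fin n → ℂ),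
      AnalyticOnNhd ℂ f (Metric.closedBall z r) → (∀ w ∈ Metric.closedBall z r, ‖f w‖ ≤ η) →
      ∀ ℓ ∈ F, ‖Dml ℓ f z‖ < ε := by
  let ρ (ℓ : Fin n → ℕ) : ℝ := r / (↑(∑ i, ℓ i) + 1)
  have hη : ∀ᶠ η in 𝓝[>] 0, ∀ ℓ ∈ F, (2 / ρ ℓ) ^ (∑ i, ℓ i) * η < ε := by
    refine (eventually_all_finset F).2 fun ℓ _ ↦ ?_
    have : ContinuousAt (fun η ↦ (2 / ρ ℓ) ^ (∑ i, ℓ i) * η) 0 := by fun_prop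
    exact (this.eventually_lt_const (by simpa)).filter_mono nhdsWithin_le_nhds
  obtain ⟨η, hη_lt, hη_pos⟩ := (hη.and self_mem_nhdsWithin).exists
  refine ⟨η, hη_pos, fun f z hf hfη ℓ hℓ ↦ ?_⟩
  have hsub : Metric.closedBall z (↑(∑ i, ℓ i) * ρ ℓ) ⊆ Metric.closedBall z r := by
    refine Metric.closedBall_subset_closedBall ?_
    rw [mul_div_left_comm]
    exact mul_le_of_le_one_right hr.le (div_le_one_of_le₀ (by linarith) (by positivity))
  exact (satisfiesCauchyEstimates_Dml ℓ (by positivity) (hf.mono hsub)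
    fun w hw ↦ hfη w (hsub hw)).2.trans_lt (hη_lt ℓ hℓ)

end CauchyEstimates

theorem lem3_2_general {n : ℕ} {K L : Set (Fin n → ℂ)} (hK : IsCompact K) (hKcv : Convex ℝ K)
    (hL : IsCompact L) (hLcv : Convex ℝ L) (hKL : Disjoint K L)
    (P : MvPolynomial (Fin n) ℂ) {ε : ℝ} (hε : 0 < ε) (F : Finset (Fin n → ℕ)) :
    ∃ Q : MvPolynomial (Fin n) ℂ,
      (∀ z ∈ K, ‖mvEval Q z - mvEval P z‖ < ε) ∧
      ∀ ℓ ∈ F, ∀ z ∈ L, ‖Dml ℓ (mvEval Q) z‖ < ε := by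
  obtain ⟨r, hr, hdisj⟩ := hKL.exists_cthickenings hK hL.isClosed
  obtain ⟨s, hsK, hsL⟩ := exists_mvPolynomial_re_separating hK hKcv Metric.isClosed_cthickening
    (hLcv.cthickening r) (hdisj.mono_left (Metric.self_subset_cthickening K))
  obtain ⟨η, hη, hDml⟩ := exists_pos_forall_norm_Dml_lt F hr hε
  obtain ⟨Q, hQK, hQL⟩ := exists_mvPolynomial_near_near_zero hK hL.cthickening hsK hsL P
    (lt_min hε hη)
  refine ⟨Q, fun z hz ↦ (hQK z hz).trans_le (min_le_left _ _), fun ℓ hℓ z hz ↦ ?_⟩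
  refine hDml _ z (analyticOnNhd_mvEval Q _) (fun w hw ↦ ?_) ℓ hℓ
  exact (hQL w (Metric.closedBall_subset_cthickening hz r hw)).le.trans (min_le_right _ _)

/-- Lemma 3.2. -/
theorem lem3_2 (n : ℕ) (Ω : Set (Fin n → ℂ)) (hΩo : IsOpen Ω) (hΩcv : Convex ℝ Ω)
    (K : Set (Fin n → ℂ)) (hKcpt : IsCompact K) (hKcv : Convex ℝ K)
    (hKΩ : K ∩ closure Ω = ∅)
    (P : MvPolynomial (Fin n) ℂ) (δ ε : ℝ) (hδ : 0 < δ) (hε : 0 < ε)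
    (F : Finset (Fin n → ℕ)) :
    ∃ Q : MvPolynomial (Fin n) ℂ,
      (∀ z ∈ K, ‖mvEval Q z - mvEval P z‖ < ε) ∧
      ∀ ℓ ∈ F, ∀ z ∈ closure Ω ∩ {z : Fin n → ℂ | ‖z‖ ≤ δ}, ‖Dml ℓ (mvEval Q) z‖ < ε := by
  have hball : {z : Fin n → ℂ | ‖z‖ ≤ δ} = Metric.closedBall 0 δ := by ext; simp
  rw [hball]
  exact lem3_2_general hKcpt hKcv ((isCompact_closedBall 0 δ).inter_left isClosed_closure)
    (hΩcv.closure.inter (convex_closedBall 0 δ))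
    ((disjoint_iff_inter_eq_empty.2 hKΩ).mono_right inter_subset_left) P hε F

end
end

section
/- Theorem 3.3: Let 𝕄 be an infinite subset of ℕ, let Ω ⊆ ℂⁿ be an open convex set, let ζ be a point of the closure of Ω, and let (N_j)_{j≥0} be any enumeration of ℕⁿ. Then there exists f ∈ A^∞(Ω) such that: for every compact convex set K ⊆ ℂⁿ disjoint from the closure of Ω and every holomorphic polynomial P on ℂⁿ, there exists a sequence (λ_N)_{N≥1} with λ_N ∈ 𝕄 such that S_{λ_N}(f,ζ) → P uniformly on K as N → ∞, and for every multi-index ℓ ∈ ℕⁿ, D^ℓ[S_{λ_N}(f,ζ)] → D^ℓ f uniformly on each compact subset of the closure of Ω as N → ∞ (here D^ℓ f denotes the continuous extension to the closure). The set of all such functions f is a dense G_δ subset of A^∞(Ω). -/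
open Set Filter Topology

noncomputable section

/-!
`A^∞(Ω)` embeds via `f ↦ (D^ℓ f)_ℓ` onto a closed subspace of the Fréchet space
`∏_ℓ C(closure Ω, ℂ)`, hence is a Baire space. By Baire's theorem it suffices to treat one compact
convex set `K` at a time: every compact convex set disjoint from `closure Ω` lies in a member, also
disjoint from `closure Ω`, of a fixed countable family. A Taylor partial sum of a polynomial of
large enough index is the polynomial itself, so for a fixed `K` what remains is that every pair
`(P, f)` is a simultaneous limit of polynomials, on `K` and in `A^∞(Ω)`.

After dilating `f` towards a point of `Ω`, it is holomorphic near `closure Ω`. On a convex open set,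
dilation towards a point together with the identity principle, applied modulo the closed algebra
generated by the polynomials, yields polynomial approximation. For the union of two convex sets
separated by a real hyperplane, sigmoids of a separating linear functional are entire functions
approximating the indicator of one of the two.
-/

section Holomorphy

variable {ι E G : Type*} [NormedAddCommGroup E] [NormedSpace ℂ E]
  [NormedAddCommGroup G] [NormedSpace ℂ G] {l : Filter ι} {F : ι → E → G} {f : E → G} {U : Set E}

lemma norm_fderiv_le_of_forall_mem_ball_norm_le {z : E} {r M : ℝ} (hr : 0 < r)
    (hf : DifferentiableOn ℂ f (Metric.ball z r)) (hM : ∀ w ∈ Metric.ball z r, ‖f w‖ ≤ M) :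
    ‖fderiv ℂ f z‖ ≤ 2 * M / r := by
  refine Complex.norm_fderiv_le_div_of_mapsTo_ball hf (fun w hw => ?_) hr
  rw [mem_closedBall_iff_norm, two_mul]
  exact (norm_sub_le _ _).trans (add_le_add (hM w hw) (hM z (Metric.mem_ball_self hr)))

lemma tendstoUniformlyOn_fderiv_zero {x : E} {r : ℝ} (hr : 0 < r)
    (hF : TendstoUniformlyOn F 0 l (Metric.ball x (2 * r)))
    (hd : ∀ᶠ k in l, DifferentiableOn ℂ (F k) (Metric.ball x (2 * r))) :
    TendstoUniformlyOn (fun k => fderiv ℂ (F k)) 0 l (Metric.ball x r) := by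
  rw [Metric.tendstoUniformlyOn_iff] at hF ⊢
  intro ε hε
  filter_upwards [hF (ε * r / 4) (by positivity), hd] with k hk hdk z hz
  have hball : Metric.ball z r ⊆ Metric.ball x (2 * r) :=
    Metric.ball_subset_ball' (by linarith [Metric.mem_ball.mp hz])
  have hbound := norm_fderiv_le_of_forall_mem_ball_norm_le hr (hdk.mono hball)
    fun w hw => (by simpa using (hk w (hball hw)).le : ‖F k w‖ ≤ ε * r / 4)
  calc dist ((0 : E → E →L[ℂ] G) z) (fderiv ℂ (F k) z) = ‖fderiv ℂ (F k) z‖ := dist_zero_left _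
    _ ≤ 2 * (ε * r / 4) / r := hbound
    _ = ε / 2 := by field_simp; norm_num
    _ < ε := half_lt_self hε

lemma uniformCauchySeqOn_fderiv {x : E} {r : ℝ} (hr : 0 < r)
    (hF : UniformCauchySeqOn F l (Metric.ball x (2 * r)))
    (hd : ∀ᶠ k in l, DifferentiableOn ℂ (F k) (Metric.ball x (2 * r))) :
    UniformCauchySeqOn (fun k => fderiv ℂ (F k)) l (Metric.ball x r) := by
  rw [SeminormedAddGroup.uniformCauchySeqOn_iff_tendstoUniformlyOn_zero] at hF ⊢
  have hd₂ := hd.prod_mk hd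
  refine (tendstoUniformlyOn_fderiv_zero (F := fun k : ι × ι => -F k.1 + F k.2) hr hF
    (hd₂.mono fun k hk => hk.1.neg.add hk.2)).congr (hd₂.mono fun k hk z hz => ?_)
  have hz' : Metric.ball x (2 * r) ∈ 𝓝 z :=
    Metric.isOpen_ball.mem_nhds (Metric.ball_subset_ball (by linarith) hz)
  have h₁ := (hk.1.differentiableAt hz').hasFDerivAt
  have h₂ := (hk.2.differentiableAt hz').hasFDerivAt
  exact (h₁.neg.add h₂).fderiv

lemma exists_ball_uniformCauchySeqOn_fderiv [LocallyCompactSpace E] (hU : IsOpen U)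
    (hF : TendstoLocallyUniformlyOn F f l U) (hd : ∀ᶠ k in l, DifferentiableOn ℂ (F k) U)
    {x : E} (hx : x ∈ U) :
    ∃ r > 0, Metric.ball x r ⊆ U ∧
      UniformCauchySeqOn (fun k => fderiv ℂ (F k)) l (Metric.ball x r) := by
  obtain ⟨C, hC, hxC, hCU⟩ := exists_compact_subset hU hx
  obtain ⟨r, hr, hrC⟩ := Metric.isOpen_iff.mp isOpen_interior x hxC
  have hball : Metric.ball x (2 * (r / 2)) ⊆ C := by
    rw [mul_div_cancel₀ r two_ne_zero]
    exact hrC.trans interior_subset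
  have hFball : TendstoUniformlyOn F f l (Metric.ball x (2 * (r / 2))) :=
    ((tendstoLocallyUniformlyOn_iff_forall_isCompact hU).mp hF C hCU hC).mono hball
  exact ⟨r / 2, half_pos hr,
    (Metric.ball_subset_ball (by linarith)).trans (hball.trans hCU),
    uniformCauchySeqOn_fderiv (half_pos hr) hFball.uniformCauchySeqOn
      (hd.mono fun k hk => hk.mono (hball.trans hCU))⟩

lemma exists_tendstoLocallyUniformlyOn_fderiv [l.NeBot] [LocallyCompactSpace E] [CompleteSpace G]
    (hU : IsOpen U) (hF : TendstoLocallyUniformlyOn F f l U)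
    (hd : ∀ᶠ k in l, DifferentiableOn ℂ (F k) U) :
    ∃ f' : E → E →L[ℂ] G, TendstoLocallyUniformlyOn (fun k => fderiv ℂ (F k)) f' l U := by
  have hloc := fun x (hx : x ∈ U) => exists_ball_uniformCauchySeqOn_fderiv hU hF hd hx
  have hlim : ∀ x ∈ U, ∃ L, Tendsto (fun k => fderiv ℂ (F k) x) l (𝓝 L) := fun x hx => by
    obtain ⟨r, hr, -, hcauchy⟩ := hloc x hx
    exact cauchy_iff_exists_le_nhds.mp (hcauchy.cauchy_map (Metric.mem_ball_self hr))
  choose! f' hf' using hlim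
  refine ⟨f', tendstoLocallyUniformlyOn_of_forall_exists_nhds fun x hx => ?_⟩
  obtain ⟨r, hr, hrU, hcauchy⟩ := hloc x hx
  exact ⟨_, mem_nhdsWithin_of_mem_nhds (Metric.ball_mem_nhds x hr),
    hcauchy.tendstoUniformlyOn_of_tendsto fun y hy => hf' y (hrU hy)⟩

lemma hasFDerivAt_of_tendstoLocallyUniformlyOn_fderiv [l.NeBot] (hU : IsOpen U)
    {f' : E → E →L[ℂ] G} (hF : TendstoLocallyUniformlyOn F f l U)
    (hF' : TendstoLocallyUniformlyOn (fun k => fderiv ℂ (F k)) f' l U)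
    (hd : ∀ᶠ k in l, DifferentiableOn ℂ (F k) U) {x : E} (hx : x ∈ U) :
    HasFDerivAt f (f' x) x := by
  have hUx : U ∈ 𝓝 x := hU.mem_nhds hx
  refine hasFDerivAt_of_tendstoUniformlyOnFilter (f' := fun k => fderiv ℂ (F k)) ?_ ?_
    (eventually_of_mem hUx fun y hy => hF.tendsto_at hy)
  · simpa only [hU.nhdsWithin_eq hx] using tendstoLocallyUniformlyOn_iff_filter.mp hF' x hx
  · filter_upwards [hd.prod_mk (eventually_mem_set.mpr hUx)] with ⟨k, y⟩ ⟨hk, hy⟩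
    exact (hk.differentiableAt (hU.mem_nhds hy)).hasFDerivAt

lemma differentiableOn_of_tendstoLocallyUniformlyOn [l.NeBot] [LocallyCompactSpace E]
    [CompleteSpace G] (hU : IsOpen U) (hF : TendstoLocallyUniformlyOn F f l U)
    (hd : ∀ᶠ k in l, DifferentiableOn ℂ (F k) U) : DifferentiableOn ℂ f U := by
  obtain ⟨f', hF'⟩ := exists_tendstoLocallyUniformlyOn_fderiv hU hF hd
  exact fun x hx => (hasFDerivAt_of_tendstoLocallyUniformlyOn_fderiv hU hF hF' hd hx)
    |>.differentiableAt.differentiableWithinAt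

lemma tendstoLocallyUniformlyOn_fderiv [l.NeBot] [LocallyCompactSpace E] [CompleteSpace G]
    (hU : IsOpen U) (hF : TendstoLocallyUniformlyOn F f l U)
    (hd : ∀ᶠ k in l, DifferentiableOn ℂ (F k) U) :
    TendstoLocallyUniformlyOn (fun k => fderiv ℂ (F k)) (fderiv ℂ f) l U := by
  obtain ⟨f', hF'⟩ := exists_tendstoLocallyUniformlyOn_fderiv hU hF hd
  exact hF'.congr_right fun x hx =>
    (hasFDerivAt_of_tendstoLocallyUniformlyOn_fderiv hU hF hF' hd hx).fderiv.symm

/-- On a complex line, the difference quotient is `dslope`, and the Schwarz lemma, applied twice,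
makes it Lipschitz in the increment. -/
lemma norm_dslope_sub_deriv_le [CompleteSpace G] {g : ℂ → G} {R M : ℝ} (hR : 0 < R)
    (hg : DifferentiableOn ℂ g (Metric.ball 0 R)) (hM : ∀ t ∈ Metric.ball 0 R, ‖g t‖ ≤ M)
    {t : ℂ} (ht : t ∈ Metric.ball 0 R) :
    ‖dslope g 0 t - deriv g 0‖ ≤ 4 * M / R ^ 2 * ‖t‖ := by
  have h0 : (0 : ℂ) ∈ Metric.ball 0 R := Metric.mem_ball_self hR
  have hquot : ∀ s ∈ Metric.ball (0 : ℂ) R, ‖dslope g 0 s‖ ≤ 2 * M / R := fun s hs =>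
    Complex.norm_dslope_le_div_of_mapsTo_ball hg (fun w hw => by
      rw [mem_closedBall_iff_norm, two_mul]
      exact (norm_sub_le _ _).trans (add_le_add (hM w hw) (hM 0 h0))) hs
  have hdiff : DifferentiableOn ℂ (dslope g 0) (Metric.ball 0 R) :=
    (Complex.differentiableOn_dslope (Metric.ball_mem_nhds 0 hR)).mpr hg
  have := Complex.dist_le_div_mul_dist_of_mapsTo_ball hdiff (R₂ := 4 * M / R) (fun w hw => by
      rw [mem_closedBall_iff_norm]
      calc _ ≤ _ := norm_sub_le _ _
        _ ≤ 2 * M / R + 2 * M / R := add_le_add (hquot w hw) (hquot 0 h0)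
        _ = 4 * M / R := by ring) ht
  rw [dist_eq_norm, dslope_same, dist_zero_right] at this
  convert this using 2
  field_simp

lemma add_smul_mem_ball {x w v : E} {r : ℝ} (hw : w ∈ Metric.ball x r) {t : ℂ}
    (ht : ‖t‖ < r / (‖v‖ + 1)) : w + t • v ∈ Metric.ball x (2 * r) := by
  rw [lt_div_iff₀ (by positivity)] at ht
  rw [mem_ball_iff_norm] at hw ⊢
  calc ‖w + t • v - x‖ = ‖(w - x) + t • v‖ := by congr 1; abel
    _ ≤ ‖w - x‖ + ‖t‖ * ‖v‖ := (norm_add_le _ _).trans_eq (by rw [norm_smul])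
    _ < 2 * r := by nlinarith [norm_nonneg t]

lemma norm_smul_sub_fderiv_apply_le [CompleteSpace G] {x w v : E} {r M : ℝ}
    (hf : DifferentiableOn ℂ f (Metric.ball x (2 * r)))
    (hM : ∀ z ∈ Metric.ball x (2 * r), ‖f z‖ ≤ M) (hw : w ∈ Metric.ball x r) {t : ℂ} (ht₀ : t ≠ 0)
    (ht : ‖t‖ < r / (‖v‖ + 1)) :
    ‖t⁻¹ • (f (w + t • v) - f w) - fderiv ℂ f w v‖ ≤ 4 * M / (r / (‖v‖ + 1)) ^ 2 * ‖t‖ := by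
  have hline : ∀ s ∈ Metric.ball (0 : ℂ) (r / (‖v‖ + 1)), w + s • v ∈ Metric.ball x (2 * r) :=
    fun s hs => add_smul_mem_ball hw (mem_ball_zero_iff.mp hs)
  have hR : 0 < r / (‖v‖ + 1) := (norm_nonneg t).trans_lt ht
  have hderiv : ∀ s ∈ Metric.ball (0 : ℂ) (r / (‖v‖ + 1)),
      HasDerivAt (fun s : ℂ => f (w + s • v)) (fderiv ℂ f (w + s • v) v) s := fun s hs =>
    (hf.differentiableAt (Metric.isOpen_ball.mem_nhds (hline s hs))).hasFDerivAt.comp_hasDerivAt s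
      (by simpa using ((hasDerivAt_id s).smul_const v).const_add w)
  have := norm_dslope_sub_deriv_le hR
    (fun s hs => (hderiv s hs).differentiableAt.differentiableWithinAt)
    (fun s hs => hM _ (hline s hs)) (mem_ball_zero_iff.mpr ht)
  rwa [dslope_of_ne _ ht₀, slope_def_module, (hderiv 0 (Metric.mem_ball_self hR)).deriv, sub_zero,
    zero_smul, add_zero] at this

lemma eventually_ne_zero_and_norm_lt {R : ℝ} (hR : 0 < R) :
    ∀ᶠ t : ℂ in 𝓝[≠] 0, t ≠ 0 ∧ ‖t‖ < R :=
  eventually_mem_nhdsWithin.and (nhdsWithin_le_nhds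
    ((eventually_norm_sub_lt 0 hR).mono fun t ht => by rwa [sub_zero] at ht))

lemma tendstoUniformlyOn_smul_sub_fderiv_apply [CompleteSpace G] {x : E} {r M : ℝ} (hr : 0 < r)
    (hf : DifferentiableOn ℂ f (Metric.ball x (2 * r)))
    (hM : ∀ z ∈ Metric.ball x (2 * r), ‖f z‖ ≤ M) (v : E) :
    TendstoUniformlyOn (fun (t : ℂ) z => t⁻¹ • (f (z + t • v) - f z))
      (fun z => fderiv ℂ f z v) (𝓝[≠] 0) (Metric.ball x r) := by
  have hbound : Tendsto (fun t : ℂ => 4 * M / (r / (‖v‖ + 1)) ^ 2 * ‖t‖) (𝓝[≠] 0) (𝓝 0) :=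
    tendsto_nhdsWithin_of_tendsto_nhds (Continuous.tendsto' (by fun_prop) 0 0 (by simp))
  rw [Metric.tendstoUniformlyOn_iff]
  intro ε hε
  filter_upwards [eventually_ne_zero_and_norm_lt (R := r / (‖v‖ + 1)) (by positivity),
    hbound.eventually (gt_mem_nhds hε)] with t ⟨ht₀, ht⟩ htε w hw
  rw [dist_eq_norm']
  exact (norm_smul_sub_fderiv_apply_le hf hM hw ht₀ ht).trans_lt htε

lemma differentiableOn_fderiv_apply [LocallyCompactSpace E] [CompleteSpace G] (hU : IsOpen U)
    (hf : DifferentiableOn ℂ f U) (v : E) : DifferentiableOn ℂ (fun z => fderiv ℂ f z v) U := by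
  intro x hx
  have hbdd : ∀ᶠ z in 𝓝 x, z ∈ U ∧ ‖f z‖ < ‖f x‖ + 1 :=
    (hU.eventually_mem hx).and ((hf.differentiableAt (hU.mem_nhds hx)).continuousAt.norm.eventually
      (gt_mem_nhds (lt_add_one _)))
  obtain ⟨ρ, hρ, hball⟩ := Metric.eventually_nhds_iff_ball.mp hbdd
  obtain ⟨r, rfl⟩ : ∃ r, ρ = 2 * r := ⟨ρ / 2, by ring⟩
  have hr : 0 < r := by linarith
  have hfball : DifferentiableOn ℂ f (Metric.ball x (2 * r)) := hf.mono fun z hz => (hball z hz).1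
  have hdiff : ∀ᶠ t : ℂ in 𝓝[≠] 0,
      DifferentiableOn ℂ (fun z => t⁻¹ • (f (z + t • v) - f z)) (Metric.ball x r) :=
    (eventually_ne_zero_and_norm_lt (R := r / (‖v‖ + 1)) (by positivity)).mono fun t ⟨_, ht⟩ =>
      ((hfball.comp (by fun_prop) fun w hw => add_smul_mem_ball hw ht).sub
        (hfball.mono (Metric.ball_subset_ball (by linarith)))).const_smul _
  exact (differentiableOn_of_tendstoLocallyUniformlyOn Metric.isOpen_ball
    (tendstoUniformlyOn_smul_sub_fderiv_apply hr hfball (fun z hz => (hball z hz).2.le)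
      v).tendstoLocallyUniformlyOn hdiff).differentiableAt (Metric.ball_mem_nhds x hr)
    |>.differentiableWithinAt

end Holomorphy

section IteratedPartialDerivatives

variable {n : ℕ} {ι : Type*} {l : Filter ι} {f g : (Fin n → ℂ) → ℂ} {U : Set (Fin n → ℂ)}

/-- The multi-index `ℓ` spelled out as the list in which each coordinate `i` occurs `ℓ i` times. -/
def indexList (ℓ : Fin n → ℕ) : List (Fin n) :=
  (List.finRange n).flatMap fun i => List.replicate (ℓ i) i

lemma Dml_eq_foldr_pd (ℓ : Fin n → ℕ) (f : (Fin n → ℂ) → ℂ) :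
    Dml ℓ f = (indexList ℓ).foldr pd f := by
  have hreplicate : ∀ (i : Fin n) (k : ℕ) (g : (Fin n → ℂ) → ℂ),
      (List.replicate k i).foldr pd g = (pd i)^[k] g := fun i k g => by
    induction k with
    | zero => rfl
    | succ k ih =>
      rw [List.replicate_succ, List.foldr_cons, ih, Function.iterate_succ_apply']
  simp only [Dml, indexList, List.foldr_flatMap, hreplicate]

lemma differentiableOn_pd (hU : IsOpen U) (hf : DifferentiableOn ℂ f U) (i : Fin n) :
    DifferentiableOn ℂ (pd i f) U :=
  differentiableOn_fderiv_apply hU hf _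

lemma differentiableOn_foldr_pd (hU : IsOpen U) (hf : DifferentiableOn ℂ f U)
    (L : List (Fin n)) : DifferentiableOn ℂ (L.foldr pd f) U := by
  induction L with
  | nil => exact hf
  | cons i L ih => exact differentiableOn_pd hU ih i

lemma eqOn_pd (hU : IsOpen U) (hfg : EqOn f g U) (i : Fin n) : EqOn (pd i f) (pd i g) U :=
  fun _ hz => congrArg (fun A : (Fin n → ℂ) →L[ℂ] ℂ => A (Pi.single i 1))
    (hfg.eventuallyEq_of_mem (hU.mem_nhds hz)).fderiv_eq

lemma eqOn_Dml (hU : IsOpen U) (hfg : EqOn f g U) (ℓ : Fin n → ℕ) :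
    EqOn (Dml ℓ f) (Dml ℓ g) U := by
  simp only [Dml_eq_foldr_pd]
  induction indexList ℓ with
  | nil => exact hfg
  | cons i L ih => exact eqOn_pd hU ih i

lemma tendstoLocallyUniformlyOn_pd [l.NeBot] {F : ι → (Fin n → ℂ) → ℂ} (hU : IsOpen U)
    (hF : TendstoLocallyUniformlyOn F f l U) (hd : ∀ᶠ k in l, DifferentiableOn ℂ (F k) U)
    (i : Fin n) : TendstoLocallyUniformlyOn (fun k => pd i (F k)) (pd i f) l U :=
  ((ContinuousLinearMap.apply ℂ ℂ (Pi.single i 1 : Fin n → ℂ)).uniformContinuous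
    |>.comp_tendstoLocallyUniformlyOn (tendstoLocallyUniformlyOn_fderiv hU hF hd))

lemma tendstoLocallyUniformlyOn_Dml [l.NeBot] {F : ι → (Fin n → ℂ) → ℂ} (hU : IsOpen U)
    (hF : TendstoLocallyUniformlyOn F f l U) (hd : ∀ᶠ k in l, DifferentiableOn ℂ (F k) U)
    (ℓ : Fin n → ℕ) : TendstoLocallyUniformlyOn (fun k => Dml ℓ (F k)) (Dml ℓ f) l U := by
  simp only [Dml_eq_foldr_pd]
  induction indexList ℓ with
  | nil => exact hF
  | cons i L ih =>
    exact tendstoLocallyUniformlyOn_pd hU ih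
      (hd.mono fun k hk => differentiableOn_foldr_pd hU hk L) i

lemma pd_const_smul (c : ℂ) (i : Fin n) : pd i (c • f) = c • pd i f := by
  funext z
  simp only [pd, fderiv_const_smul_field, Pi.smul_apply, smul_apply]

lemma pd_comp_affine (a : Fin n → ℂ) (c : ℂ) (i : Fin n) :
    pd i (fun z => f (a + c • z)) = c • fun z => pd i f (a + c • z) := by
  funext z
  have hscale := fderiv_comp_smul (f := fun w => f (a + w)) (x := z) c
  simp only [fderiv_comp_add_left] at hscale
  simp only [pd, hscale, Pi.smul_apply, smul_apply]

lemma Dml_comp_affine (a : Fin n → ℂ) (c : ℂ) (ℓ : Fin n → ℕ) (f : (Fin n → ℂ) → ℂ) :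
    Dml ℓ (fun z => f (a + c • z)) =
      c ^ (indexList ℓ).length • fun z => Dml ℓ f (a + c • z) := by
  simp only [Dml_eq_foldr_pd]
  induction indexList ℓ with
  | nil => simp
  | cons i L ih =>
    simp only [List.foldr_cons, ih, pd_const_smul, pd_comp_affine, List.length_cons, pow_succ,
      mul_smul]

lemma Dml_zero (f : (Fin n → ℂ) → ℂ) : Dml 0 f = f := by
  simp only [Dml, Pi.zero_apply, Function.iterate_zero, id_eq, List.foldr_fixed]

end IteratedPartialDerivatives

section TaylorPolynomials

variable {n : ℕ}

lemma sum_indexList (ℓ : Fin n → ℕ) :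
    ((indexList ℓ).map fun i => Finsupp.single i 1).sum = Finsupp.equivFunOnFinite.symm ℓ := by
  rw [indexList, List.map_flatMap, List.flatMap_def, List.sum_flatten]
  simp only [List.map_map, Function.comp_def, List.map_replicate, List.sum_replicate,
    Finsupp.smul_single, smul_eq_mul, mul_one]
  rw [← List.ofFn_eq_map, List.sum_ofFn]
  exact (Finsupp.equivFunOnFinite_symm_eq_sum ℓ).symm

lemma prod_factorial_add_single (m : Fin n →₀ ℕ) (i : Fin n) :
    ∏ k, ((m + Finsupp.single i 1 : Fin n →₀ ℕ) k).factorial =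
      (m i + 1) * ∏ k, (m k).factorial := by
  rw [← Finset.mul_prod_erase _ _ (Finset.mem_univ i),
    ← Finset.mul_prod_erase _ _ (Finset.mem_univ i), ← mul_assoc]
  congr 1
  · simp [Nat.factorial_succ]
  · refine Finset.prod_congr rfl fun k hk => ?_
    simp [Finsupp.single_eq_of_ne (Finset.ne_of_mem_erase hk)]

lemma coeff_foldr_pderiv {R : Type*} [CommSemiring R] (p : MvPolynomial (Fin n) R)
    (L : List (Fin n)) (m : Fin n →₀ ℕ) :
    (∏ k, (m k).factorial : ℕ) * (L.foldr (fun i q => MvPolynomial.pderiv i q) p).coeff m =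
      (∏ k, ((m + (L.map fun i => Finsupp.single i 1).sum : Fin n →₀ ℕ) k).factorial : ℕ) *
        p.coeff (m + (L.map fun i => Finsupp.single i 1).sum) := by
  induction L generalizing m with
  | nil => simp only [List.foldr_nil, List.map_nil, List.sum_nil, add_zero]
  | cons i L ih =>
    have := ih (m + Finsupp.single i 1)
    rw [prod_factorial_add_single] at this
    rw [List.foldr_cons, MvPolynomial.coeff_pderiv, List.map_cons, List.sum_cons, ← add_assoc,
      ← this]
    push_cast
    ring

lemma hasFDerivAt_mvEval (p : MvPolynomial (Fin n) ℂ) (z : Fin n → ℂ) :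
    HasFDerivAt (mvEval p) (∑ i, mvEval (MvPolynomial.pderiv i p) z •
      ContinuousLinearMap.proj (R := ℂ) (φ := fun _ : Fin n => ℂ) i) z := by
  induction p using MvPolynomial.induction_on with
  | C a =>
    refine ((hasFDerivAt_const a z).congr_of_eventuallyEq
      (Eventually.of_forall fun w => by simp [mvEval])).congr_fderiv ?_
    ext v
    simp [mvEval]
  | add p q hp hq =>
    refine ((hp.add hq).congr_of_eventuallyEq
      (Eventually.of_forall fun w => by simp [mvEval])).congr_fderiv ?_
    ext v
    simp [mvEval, add_mul, Finset.sum_add_distrib]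
  | mul_X p j hp =>
    have := hp.mul (ContinuousLinearMap.proj (R := ℂ) (φ := fun _ : Fin n => ℂ) j).hasFDerivAt
    refine (this.congr_of_eventuallyEq
      (Eventually.of_forall fun w => by simp [mvEval])).congr_fderiv ?_
    ext v
    simp [mvEval, MvPolynomial.pderiv_X, Pi.single_apply, add_mul, Finset.sum_add_distrib,
      Finset.mul_sum, apply_ite, mul_assoc]

lemma differentiable_mvEval (p : MvPolynomial (Fin n) ℂ) : Differentiable ℂ (mvEval p) :=
  fun z => (hasFDerivAt_mvEval p z).differentiableAt

lemma pd_mvEval (p : MvPolynomial (Fin n) ℂ) (i : Fin n) :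
    pd i (mvEval p) = mvEval (MvPolynomial.pderiv i p) := by
  funext z
  simp [pd, (hasFDerivAt_mvEval p z).fderiv, Pi.single_apply]

/-- The iterated derivative `D^ℓ` as a linear operator on polynomials. -/
def polyDeriv (ℓ : Fin n → ℕ) : MvPolynomial (Fin n) ℂ →ₗ[ℂ] MvPolynomial (Fin n) ℂ :=
  (indexList ℓ).foldr (fun i T => (MvPolynomial.pderiv i).toLinearMap ∘ₗ T) LinearMap.id

lemma polyDeriv_apply (ℓ : Fin n → ℕ) (p : MvPolynomial (Fin n) ℂ) :
    polyDeriv ℓ p = (indexList ℓ).foldr (fun i q => MvPolynomial.pderiv i q) p := by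
  rw [polyDeriv]
  induction indexList ℓ with
  | nil => rfl
  | cons i L ih => exact congrArg (MvPolynomial.pderiv i) ih

lemma Dml_mvEval (p : MvPolynomial (Fin n) ℂ) (ℓ : Fin n → ℕ) :
    Dml ℓ (mvEval p) = mvEval (polyDeriv ℓ p) := by
  rw [Dml_eq_foldr_pd, polyDeriv_apply]
  induction indexList ℓ with
  | nil => rfl
  | cons i L ih => rw [List.foldr_cons, ih, pd_mvEval, List.foldr_cons]

lemma Dml_mvEval_zero (p : MvPolynomial (Fin n) ℂ) (ℓ : Fin n → ℕ) :
    Dml ℓ (mvEval p) 0 =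
      (∏ i, (ℓ i).factorial : ℕ) * p.coeff (Finsupp.equivFunOnFinite.symm ℓ) := by
  have := coeff_foldr_pderiv p (indexList ℓ) 0
  rw [sum_indexList, zero_add] at this
  rw [Dml_mvEval, mvEval, MvPolynomial.eval_zero, MvPolynomial.constantCoeff_eq, polyDeriv_apply]
  simpa using this

/-- The change of centre `p ↦ p (X - ζ)`. -/
def recenter (ζ : Fin n → ℂ) : MvPolynomial (Fin n) ℂ →ₐ[ℂ] MvPolynomial (Fin n) ℂ :=
  MvPolynomial.aeval fun i => MvPolynomial.X i - MvPolynomial.C (ζ i)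

lemma mvEval_recenter (ζ : Fin n → ℂ) (p : MvPolynomial (Fin n) ℂ) (z : Fin n → ℂ) :
    mvEval (recenter ζ p) z = mvEval p (z - ζ) := by
  have hcomp : (MvPolynomial.aeval z).comp (recenter ζ) = MvPolynomial.aeval (z - ζ) :=
    MvPolynomial.algHom_ext fun i => by simp [recenter]
  simpa only [mvEval, AlgHom.comp_apply, MvPolynomial.aeval_eq_eval] using
    DFunLike.congr_fun hcomp p

lemma recenter_surjective (ζ : Fin n → ℂ) : Function.Surjective (recenter ζ) := fun p =>
  ⟨recenter (-ζ) p, MvPolynomial.funext fun z => by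
    have h := mvEval_recenter ζ (recenter (-ζ) p) z
    rwa [mvEval_recenter (-ζ), sub_neg_eq_add, sub_add_cancel] at h⟩

lemma Dml_mvEval_recenter (ζ : Fin n → ℂ) (p : MvPolynomial (Fin n) ℂ) (ℓ : Fin n → ℕ) :
    Dml ℓ (mvEval (recenter ζ p)) ζ =
      (∏ i, (ℓ i).factorial : ℕ) * p.coeff (Finsupp.equivFunOnFinite.symm ℓ) := by
  have htranslate : mvEval (recenter ζ p) = fun z => mvEval p (-ζ + (1 : ℂ) • z) := by
    funext z
    rw [mvEval_recenter, one_smul, neg_add_eq_sub]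
  rw [htranslate, Dml_comp_affine, ← Dml_mvEval_zero]
  simp

/-- The normalized monomial `(z - ζ)^ℓ / ℓ!`. -/
def taylorMonomial (ζ : Fin n → ℂ) (ℓ : Fin n → ℕ) : MvPolynomial (Fin n) ℂ :=
  recenter ζ (MvPolynomial.monomial (Finsupp.equivFunOnFinite.symm ℓ)
    (((∏ i, (ℓ i).factorial : ℕ) : ℂ))⁻¹)

/-- The partial sum `S_lam` around `ζ` as a polynomial, for prescribed derivatives `a ℓ` at `ζ`. -/
def taylorPoly (Nj : ℕ → Fin n → ℕ) (ζ : Fin n → ℂ) (a : (Fin n → ℕ) → ℂ) (lam : ℕ) :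
    MvPolynomial (Fin n) ℂ :=
  ∑ j ∈ Finset.range (lam + 1), a (Nj j) • taylorMonomial ζ (Nj j)

lemma mvEval_taylorPoly (Nj : ℕ → Fin n → ℕ) (g : (Fin n → ℕ) → (Fin n → ℂ) → ℂ)
    (ζ : Fin n → ℂ) (lam : ℕ) :
    mvEval (taylorPoly Nj ζ (fun ℓ => g ℓ ζ) lam) = pSumExt Nj g ζ lam := by
  funext z
  have hmonomial : ∀ ℓ, MvPolynomial.eval z (taylorMonomial ζ ℓ) =
      (((∏ i, (ℓ i).factorial : ℕ) : ℂ))⁻¹ * ∏ i, (z i - ζ i) ^ ℓ i := fun ℓ => by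
    change mvEval (recenter ζ _) z = _
    rw [mvEval_recenter, mvEval, MvPolynomial.eval_monomial, Finsupp.prod_fintype _ _ (by simp)]
    rfl
  simp only [mvEval, taylorPoly, pSumExt, map_sum, MvPolynomial.smul_eval, hmonomial]
  exact Finset.sum_congr rfl fun j _ => by ring

lemma eventually_taylorPoly_eq {Nj : ℕ → Fin n → ℕ} (hNj : Function.Bijective Nj)
    (ζ : Fin n → ℂ) (p : MvPolynomial (Fin n) ℂ) :
    ∀ᶠ lam in atTop, taylorPoly Nj ζ (fun ℓ => Dml ℓ (mvEval p) ζ) lam = p := by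
  obtain ⟨q, rfl⟩ := recenter_surjective ζ p
  have hterm : ∀ ℓ, Dml ℓ (mvEval (recenter ζ q)) ζ • taylorMonomial ζ ℓ =
      recenter ζ (MvPolynomial.monomial (Finsupp.equivFunOnFinite.symm ℓ)
        (q.coeff (Finsupp.equivFunOnFinite.symm ℓ))) := fun ℓ => by
    have hfactorial : ((∏ i, (ℓ i).factorial : ℕ) : ℂ) ≠ 0 :=
      Nat.cast_ne_zero.mpr (Finset.prod_ne_zero_iff.mpr fun i _ => (ℓ i).factorial_ne_zero)
    rw [Dml_mvEval_recenter, taylorMonomial, ← map_smul, MvPolynomial.smul_monomial, smul_eq_mul,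
      mul_right_comm, mul_inv_cancel₀ hfactorial, one_mul]
  let e : ℕ ≃ (Fin n →₀ ℕ) := (Equiv.ofBijective Nj hNj).trans Finsupp.equivFunOnFinite.symm
  have hrange : ∀ᶠ lam in atTop, q.support.map e.symm.toEmbedding ⊆ Finset.range (lam + 1) :=
    (tendsto_finset_range.comp (tendsto_add_atTop_nat 1)).eventually (eventually_ge_atTop _)
  filter_upwards [hrange] with lam hlam
  simp only [taylorPoly, hterm, ← map_sum]
  congr 1
  calc ∑ j ∈ Finset.range (lam + 1), MvPolynomial.monomial (e j) (q.coeff (e j))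
      = ∑ j ∈ q.support.map e.symm.toEmbedding, MvPolynomial.monomial (e j) (q.coeff (e j)) :=
        (Finset.sum_subset hlam fun j _ hj => by
          have : e j ∉ q.support := fun h =>
            hj (Finset.mem_map.mpr ⟨e j, h, e.symm_apply_apply j⟩)
          rw [MvPolynomial.notMem_support_iff.mp this, map_zero]).symm
    _ = ∑ m ∈ q.support, MvPolynomial.monomial m (q.coeff m) := by simp
    _ = q := q.support_sum_monomial_coeff

end TaylorPolynomials

section ContinuousMapValued

variable {𝕜 X G : Type*} [RCLike 𝕜] [TopologicalSpace X] [CompactSpace X]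
  [NormedAddCommGroup G] [NormedSpace 𝕜 G]

lemma hasDerivAt_continuousMap {F F' : 𝕜 → C(X, G)} {s : 𝕜}
    (hF : ∀ᶠ t in 𝓝 s, ∀ x, HasDerivAt (fun u => F u x) (F' t x) t) (hF' : ContinuousAt F' s) :
    HasDerivAt F (F' s) s := by
  rw [hasDerivAt_iff_isLittleO, Asymptotics.isLittleO_iff]
  intro c hc
  obtain ⟨ε, hε, hball⟩ := Metric.eventually_nhds_iff_ball.mp
    (hF.and (Metric.continuousAt_iff'.mp hF' c hc))
  filter_upwards [Metric.ball_mem_nhds s hε] with t ht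
  refine (ContinuousMap.norm_le _ (by positivity)).mpr fun x => ?_
  have hderiv : ∀ u ∈ Metric.ball s ε, HasDerivWithinAt (fun u => F u x - u • F' s x)
      (F' u x - F' s x) (Metric.ball s ε) u := fun u hu => by
    have hlinear : HasDerivAt (fun u : 𝕜 => u • F' s x) (F' s x) u := by
      simpa using (hasDerivAt_id u).smul_const (F' s x)
    exact (((hball u hu).1 x).fun_sub hlinear).hasDerivWithinAt
  have hbound : ∀ u ∈ Metric.ball s ε, ‖F' u x - F' s x‖ ≤ c := fun u hu => by
    rw [← dist_eq_norm]
    exact (ContinuousMap.dist_apply_le_dist x).trans (hball u hu).2.le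
  refine le_of_eq_of_le (congrArg norm ?_) <|
    (convex_ball s ε).norm_image_sub_le_of_norm_hasDerivWithin_le hderiv hbound
      (Metric.mem_ball_self hε) ht
  change F t x - F s x - (t - s) • F' s x = _
  rw [sub_smul]
  abel

end ContinuousMapValued

section IdentityPrinciple

variable {E E' : Type*} [NormedAddCommGroup E] [NormedSpace ℂ E]
  [NormedAddCommGroup E'] [NormedSpace ℂ E']

lemma iteratedDeriv_clm_comp (A : E →L[ℂ] E') {F : ℂ → E} {z : ℂ} {k : ℕ}
    (hF : ContDiffAt ℂ k F z) :
    iteratedDeriv k (fun s => A (F s)) z = A (iteratedDeriv k F z) := by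
  rw [iteratedDeriv_eq_iteratedFDeriv, iteratedDeriv_eq_iteratedFDeriv]
  exact congrArg (· fun _ => 1) (A.iteratedFDeriv_comp_left hF le_rfl)

lemma mem_of_forall_iteratedDeriv_mem [CompleteSpace E] {W : Submodule ℂ E}
    (hW : IsClosed (W : Set E)) {V : Set ℂ} (hV : IsOpen V) (hVc : IsPreconnected V) {F : ℂ → E}
    (hF : DifferentiableOn ℂ F V) {z : ℂ} (hz : z ∈ V) (hderiv : ∀ k, iteratedDeriv k F z ∈ W)
    {s : ℂ} (hs : s ∈ V) : F s ∈ W := by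
  have : IsClosed (W : Set E) := hW
  have hquot : AnalyticOnNhd ℂ (fun t => W.mkQL (F t)) V :=
    (W.mkQL.differentiable.comp_differentiableOn hF).analyticOnNhd hV
  have hzero : ∀ k, iteratedDeriv k (fun t => W.mkQL (F t)) z = 0 := fun k => by
    rw [iteratedDeriv_clm_comp _ (hF.analyticOnNhd hV z hz).contDiffAt]
    exact (Submodule.Quotient.mk_eq_zero W).mpr (hderiv k)
  have horder : analyticOrderAt (fun t => W.mkQL (F t)) z = ⊤ :=
    ENat.eq_top_iff_forall_ge.mpr fun k =>
      (natCast_le_analyticOrderAt_iff_iteratedDeriv_eq_zero (hquot z hz)).mpr fun i _ => hzero i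
  exact (Submodule.Quotient.mk_eq_zero W).mp <|
    hquot.eqOn_zero_of_preconnected_of_eventuallyEq_zero hVc hz
      (analyticOrderAt_eq_top.mp horder) hs

end IdentityPrinciple

section Runge

variable {n : ℕ}

/-- Restriction of polynomials to `E`, as an algebra homomorphism. -/
def polyMap (E : Set (Fin n → ℂ)) : MvPolynomial (Fin n) ℂ →ₐ[ℂ] C(E, ℂ) :=
  MvPolynomial.aeval fun i => ⟨fun z : E => z.1 i, (continuous_apply i).comp continuous_subtype_val⟩

lemma polyMap_apply (E : Set (Fin n → ℂ)) (p : MvPolynomial (Fin n) ℂ) (z : E) :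
    polyMap E p z = mvEval p z := by
  have heval : (ContinuousMap.evalAlgHom ℂ ℂ z).comp (polyMap E) = MvPolynomial.aeval z.1 :=
    MvPolynomial.algHom_ext fun i => by simp [polyMap]
  exact (DFunLike.congr_fun heval p).trans (by rw [MvPolynomial.aeval_eq_eval]; rfl)

/-- The uniform closure of the polynomials in `C(E, ℂ)`, classically denoted `P(E)`. -/
def polyClosure (E : Set (Fin n → ℂ)) [CompactSpace E] : Subalgebra ℂ C(E, ℂ) :=
  (polyMap E).range.topologicalClosure

lemma polyMap_mem_polyClosure (E : Set (Fin n → ℂ)) [CompactSpace E]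
    (p : MvPolynomial (Fin n) ℂ) : polyMap E p ∈ polyClosure E :=
  Subalgebra.le_topologicalClosure _ ⟨p, rfl⟩

lemma exists_polyMap_norm_sub_lt {E : Set (Fin n → ℂ)} [CompactSpace E] {h : C(E, ℂ)}
    (hh : h ∈ polyClosure E) {ε : ℝ} (hε : 0 < ε) : ∃ p, ‖polyMap E p - h‖ < ε := by
  obtain ⟨_, ⟨p, rfl⟩, hp⟩ := Metric.mem_closure_iff.mp hh ε hε
  exact ⟨p, by rwa [dist_comm, dist_eq_norm] at hp⟩

/-- The dilation `z ↦ f (x + s (z - x))` as a continuous function on `L`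
(with junk value `0` if it is not continuous there). -/
def dilate (L : Set (Fin n → ℂ)) (x : Fin n → ℂ) (f : (Fin n → ℂ) → ℂ) (s : ℂ) : C(L, ℂ) :=
  ContinuousMap.mkD (fun z : L => f (x + s • (z - x))) 0

variable {L U : Set (Fin n → ℂ)} {x : Fin n → ℂ} {f : (Fin n → ℂ) → ℂ} {V : Set ℂ} {s : ℂ}

lemma dilate_apply (hf : ContinuousOn f U) (hs : ∀ z ∈ L, x + s • (z - x) ∈ U) (z : L) :
    dilate L x f s z = f (x + s • (z - x)) :=
  ContinuousMap.mkD_apply_of_continuous <|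
    hf.comp_continuous (by fun_prop) fun z => hs z z.2

lemma continuousOn_dilate (hf : ContinuousOn f U) (hVU : ∀ s ∈ V, ∀ z ∈ L, x + s • (z - x) ∈ U) :
    ContinuousOn (dilate L x f) V := by
  rw [continuousOn_iff_continuous_domRestrict]
  have hjoint : Continuous fun q : V × L => f (x + (q.1 : ℂ) • (q.2.1 - x)) :=
    hf.comp_continuous (by fun_prop) fun q => hVU q.1 q.1.2 q.2 q.2.2
  convert (ContinuousMap.curry ⟨_, hjoint⟩).continuous using 1
  funext s
  ext z
  exact dilate_apply hf (hVU s s.2) z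

lemma fderiv_apply_eq_sum_pd (f : (Fin n → ℂ) → ℂ) (z v : Fin n → ℂ) :
    fderiv ℂ f z v = ∑ i, v i * pd i f z := by
  conv_lhs => rw [pi_eq_sum_univ' v]
  simp only [map_sum, map_smul, smul_eq_mul, pd]

lemma hasDerivAt_dilate [CompactSpace L] (hU : IsOpen U) (hf : DifferentiableOn ℂ f U)
    (hV : IsOpen V) (hVU : ∀ s ∈ V, ∀ z ∈ L, x + s • (z - x) ∈ U) (hs : s ∈ V) :
    HasDerivAt (dilate L x f) (∑ i, polyMap L (MvPolynomial.X i - MvPolynomial.C (x i)) *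
      dilate L x (pd i f) s) s := by
  refine hasDerivAt_continuousMap (F' := fun s => ∑ i, polyMap L (MvPolynomial.X i -
    MvPolynomial.C (x i)) * dilate L x (pd i f) s) ?_ ?_
  · filter_upwards [hV.mem_nhds hs] with t ht z
    have hline : HasDerivAt (fun u : ℂ => x + u • (z.1 - x)) (z.1 - x) t := by
      simpa using ((hasDerivAt_id t).smul_const (z.1 - x)).const_add x
    have hcomp := (hf.differentiableAt (hU.mem_nhds (hVU t ht z z.2))).hasFDerivAt.comp_hasDerivAt
      t hline
    have hlocal : (fun u => dilate L x f u z) =ᶠ[𝓝 t] fun u => f (x + u • (z.1 - x)) := by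
      filter_upwards [hV.mem_nhds ht] with u hu
      exact dilate_apply hf.continuousOn (hVU u hu) z
    refine (hcomp.congr_of_eventuallyEq hlocal).congr_deriv ?_
    simp only [fderiv_apply_eq_sum_pd, ContinuousMap.sum_apply, ContinuousMap.mul_apply,
      polyMap_apply, dilate_apply (differentiableOn_pd hU hf _).continuousOn (hVU t ht)]
    simp only [mvEval, map_sub, MvPolynomial.eval_X, MvPolynomial.eval_C, Pi.sub_apply]
  · refine tendsto_finsetSum _ fun i _ => Tendsto.const_mul _ ?_
    exact (continuousOn_dilate (differentiableOn_pd hU hf i).continuousOn hVU).continuousAt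
      (hV.mem_nhds hs)

lemma iteratedDeriv_dilate_zero_mem_polyClosure [CompactSpace L] (hU : IsOpen U)
    (hV : IsOpen V) (hVU : ∀ s ∈ V, ∀ z ∈ L, x + s • (z - x) ∈ U) (h0 : 0 ∈ V) (k : ℕ)
    {f : (Fin n → ℂ) → ℂ} (hf : DifferentiableOn ℂ f U) :
    iteratedDeriv k (dilate L x f) 0 ∈ polyClosure L := by
  induction k generalizing f with
  | zero =>
    have hconst : dilate L x f 0 = polyMap L (MvPolynomial.C (f x)) := by
      ext z
      rw [dilate_apply hf.continuousOn (hVU 0 h0), polyMap_apply, mvEval, MvPolynomial.eval_C,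
        zero_smul, add_zero]
    rw [iteratedDeriv_zero, hconst]
    exact polyMap_mem_polyClosure L _
  | succ k ih =>
    have hanalytic : ∀ i, ContDiffAt ℂ k (dilate L x (pd i f)) 0 := fun i =>
      (DifferentiableOn.analyticOnNhd (fun s hs => (hasDerivAt_dilate hU
        (differentiableOn_pd hU hf i) hV hVU hs).differentiableAt.differentiableWithinAt) hV
        0 h0).contDiffAt
    have hderiv : deriv (dilate L x f) =ᶠ[𝓝 0] fun s => ∑ i, ContinuousLinearMap.mul ℂ C(L, ℂ)
        (polyMap L (MvPolynomial.X i - MvPolynomial.C (x i))) (dilate L x (pd i f) s) := by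
      filter_upwards [hV.mem_nhds h0] with s hs
      exact (hasDerivAt_dilate hU hf hV hVU hs).deriv
    rw [iteratedDeriv_succ', hderiv.iteratedDeriv_eq, iteratedDeriv_fun_sum
      (fun i _ => ContDiffAt.fun_comp 0 (ContinuousLinearMap.contDiff _).contDiffAt (hanalytic i))]
    refine sum_mem fun i _ => ?_
    rw [iteratedDeriv_clm_comp _ (hanalytic i)]
    exact mul_mem (polyMap_mem_polyClosure L _) (ih (differentiableOn_pd hU hf i))

lemma exists_convex_forall_add_smul_sub_mem (hU : IsOpen U) (hUc : Convex ℝ U) (hL : IsCompact L)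
    (hLU : L ⊆ U) (hx : x ∈ U) : ∃ V : Set ℂ, IsOpen V ∧ Convex ℝ V ∧ 0 ∈ V ∧ 1 ∈ V ∧
      ∀ s ∈ V, ∀ z ∈ L, x + s • (z - x) ∈ U := by
  have hsegment : segment ℝ (0 : ℂ) 1 ×ˢ L ⊆
      (fun q : ℂ × (Fin n → ℂ) => x + q.1 • (q.2 - x)) ⁻¹' U := by
    rintro ⟨s, z⟩ ⟨hs, hz⟩
    obtain ⟨t, ht, rfl⟩ := segment_eq_image ℝ (0 : ℂ) 1 ▸ hs
    simpa using hUc.add_smul_sub_mem hx (hLU hz) ht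
  have hcompact : IsCompact (segment ℝ (0 : ℂ) 1) := by
    rw [segment_eq_image]
    exact isCompact_Icc.image (by fun_prop)
  obtain ⟨V₀, W, hV₀, -, hsub, hLW, hVW⟩ :=
    generalized_tube_lemma hcompact hL (hU.preimage (by fun_prop)) hsegment
  obtain ⟨δ, hδ, hthick⟩ := hcompact.exists_thickening_subset_open hV₀ hsub
  have hself := Metric.self_subset_thickening hδ (segment ℝ (0 : ℂ) 1)
  exact ⟨Metric.thickening δ (segment ℝ 0 1), Metric.isOpen_thickening,
    (convex_segment _ _).thickening δ, hself (left_mem_segment _ _ _),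
    hself (right_mem_segment _ _ _), fun s hs z hz => hVW (mk_mem_prod (hthick hs) (hLW hz))⟩

lemma mem_polyClosure_of_convex [CompactSpace L] (hU : IsOpen U) (hUc : Convex ℝ U)
    (hf : DifferentiableOn ℂ f U) (hLU : L ⊆ U) {g : C(L, ℂ)} (hg : ∀ z : L, g z = f z) :
    g ∈ polyClosure L := by
  rcases U.eq_empty_or_nonempty with rfl | ⟨x, hx⟩
  · have hzero : g = 0 := ContinuousMap.ext fun z => (hLU z.2).elim
    exact hzero ▸ zero_mem _
  obtain ⟨V, hV, hVc, h0, h1, hVU⟩ :=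
    exists_convex_forall_add_smul_sub_mem hU hUc (isCompact_iff_compactSpace.mpr ‹_›) hLU hx
  have hdilate : g = dilate L x f 1 := ContinuousMap.ext fun z => by
    rw [dilate_apply hf.continuousOn (hVU 1 h1), one_smul, add_sub_cancel, hg]
  rw [hdilate]
  exact mem_of_forall_iteratedDeriv_mem (W := Subalgebra.toSubmodule (polyClosure L))
    (Subalgebra.isClosed_topologicalClosure _) hV hVc.isPreconnected
    (fun s hs => (hasDerivAt_dilate hU hf hV hVU hs).differentiableAt.differentiableWithinAt) h0
    (fun k => iteratedDeriv_dilate_zero_mem_polyClosure hU hV hVU h0 k hf) h1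

end Runge

section Separation

open NormedSpace (exp)

lemma norm_inv_one_add_exp_le {z : ℂ} (hz : 0 < z.re) : ‖(1 + Complex.exp z)⁻¹‖ ≤ (z.re)⁻¹ := by
  rw [norm_inv]
  refine inv_anti₀ hz ?_
  calc z.re ≤ Real.exp z.re - 1 := by linarith [Real.add_one_le_exp z.re]
    _ = ‖Complex.exp z‖ - ‖(1 : ℂ)‖ := by rw [Complex.norm_exp, norm_one]
    _ ≤ ‖1 + Complex.exp z‖ := by
      rw [add_comm]
      exact norm_sub_le_norm_add _ _

lemma one_add_exp_ne_zero {z : ℂ} (hz : z.re ≠ 0) : 1 + Complex.exp z ≠ 0 := fun h => by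
  have hnorm := congrArg norm (eq_neg_of_add_eq_zero_right h)
  rw [Complex.norm_exp, norm_neg, norm_one, Real.exp_eq_one_iff] at hnorm
  exact hz hnorm

lemma norm_inv_one_add_exp_sub_one_le {z : ℂ} (hz : z.re < 0) :
    ‖(1 + Complex.exp z)⁻¹ - 1‖ ≤ (-z.re)⁻¹ := by
  have hsymm : (1 + Complex.exp z)⁻¹ - 1 = -(1 + Complex.exp (-z))⁻¹ := by
    have hpos := one_add_exp_ne_zero hz.ne
    have hneg := one_add_exp_ne_zero (z := -z) (neg_ne_zero.mpr hz.ne)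
    have hmul : Complex.exp z * Complex.exp (-z) = 1 := by
      rw [← Complex.exp_add, add_neg_cancel, Complex.exp_zero]
    field_simp
    linear_combination -hmul
  rw [hsymm, norm_neg]
  exact norm_inv_one_add_exp_le (by simpa using hz)

lemma isUnit_one_add_exp {A : Type*} [NormedCommRing A] [NormedAlgebra ℂ A] [CompleteSpace A]
    {a : A} (ha : ∀ μ ∈ spectrum ℂ a, μ.re ≠ 0) : IsUnit (1 + exp a) := by
  let +nondep : NormedAlgebra ℚ A := .restrictScalars ℚ ℂ A
  by_contra hunit
  obtain ⟨φ, hφ⟩ := WeakDual.CharacterSpace.exists_apply_eq_zero hunit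
  rw [map_add, map_one, NormedSpace.map_exp φ (map_continuous φ), ← Complex.exp_eq_exp_ℂ] at hφ
  exact one_add_exp_ne_zero (ha _ (AlgHom.apply_mem_spectrum φ a)) hφ

variable {X : Type*} [TopologicalSpace X] [CompactSpace X] {S : Subalgebra ℂ C(X, ℂ)} {w : C(X, ℂ)}

lemma re_ne_zero_of_mem_spectrum (hS : IsClosed (S : Set C(X, ℂ))) (hw : w ∈ S)
    (hre : ∀ x, (w x).re ≠ 0) {μ : ℂ} (hμ : μ ∈ spectrum ℂ (⟨w, hw⟩ : S)) : μ.re ≠ 0 := by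
  intro hμ0
  have hline : {z : ℂ | z.re = 0} ⊆ connectedComponentIn (spectrum ℂ w)ᶜ μ := by
    refine (convex_hyperplane Complex.reLm.isLinear 0).isPreconnected.subset_connectedComponentIn
      hμ0 fun z hz hspectrum => ?_
    rw [ContinuousMap.spectrum_eq_range] at hspectrum
    obtain ⟨x, rfl⟩ := hspectrum
    exact hre x hz
  obtain ⟨C, hC⟩ := ((Subalgebra.spectrum_isBounded_connectedComponentIn S _ hμ).subset
    hline).exists_norm_le
  have hle := hC ((|C| + 1 : ℝ) * Complex.I) (by simp)
  rw [norm_mul, Complex.norm_I, mul_one, Complex.norm_real, Real.norm_eq_abs] at hle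
  linarith [le_abs_self (|C| + 1), le_abs_self C]

lemma exists_mem_forall_apply_eq_inv_one_add_exp (hS : IsClosed (S : Set C(X, ℂ))) (hw : w ∈ S)
    (hre : ∀ x, (w x).re ≠ 0) : ∃ h ∈ S, ∀ x, h x = (1 + Complex.exp (w x))⁻¹ := by
  have := hS.completeSpace_coe
  let +nondep : NormedAlgebra ℚ S := .restrictScalars ℚ ℂ S
  obtain ⟨h, hh⟩ := (isUnit_one_add_exp (a := (⟨w, hw⟩ : S))
    fun μ => re_ne_zero_of_mem_spectrum hS hw hre).exists_right_inv
  refine ⟨h, h.2, fun x => (inv_eq_of_mul_eq_one_right ?_).symm⟩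
  let evalAt : S →ₐ[ℂ] ℂ := (ContinuousMap.evalAlgHom ℂ ℂ x).comp S.val
  have hcontinuous : Continuous evalAt := (continuous_eval_const x).comp continuous_subtype_val
  have happly := congrArg evalAt hh
  rwa [map_mul, map_add, map_one, NormedSpace.map_exp evalAt hcontinuous,
    ← Complex.exp_eq_exp_ℂ] at happly

/- The sigmoids `(1 + exp (N w))⁻¹` converge to `0` where `Re w > 0` and to `1` where `Re w < 0`. -/
lemma exists_mem_norm_lt_of_re_pos_of_re_neg (hS : IsClosed (S : Set C(X, ℂ))) (hw : w ∈ S)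
    (hre : ∀ x, (w x).re ≠ 0) {ε : ℝ} (hε : 0 < ε) :
    ∃ h ∈ S, ∀ x, (0 < (w x).re → ‖h x‖ < ε) ∧ ((w x).re < 0 → ‖h x - 1‖ < ε) := by
  obtain ⟨a, ha, hle⟩ := isCompact_univ.exists_forall_le' (f := fun x => |(w x).re|) (a := 0)
    (by fun_prop) fun x _ => abs_pos.mpr (hre x)
  obtain ⟨N, hN⟩ := exists_nat_gt (ε⁻¹ / a)
  have hNa : ε⁻¹ < N * a := (div_lt_iff₀ ha).mp hN
  have hNpos : (0 : ℝ) < N := (by positivity : 0 < ε⁻¹ / a).trans hN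
  have hre_smul : ∀ x, (((N : ℂ) • w) x).re = N * (w x).re := fun x => by simp
  obtain ⟨h, hhS, hh⟩ := exists_mem_forall_apply_eq_inv_one_add_exp hS (S.smul_mem hw (N : ℂ))
    fun x => by rw [hre_smul]; exact mul_ne_zero hNpos.ne' (hre x)
  have hlt : ∀ t : ℝ, a ≤ t → (N * t)⁻¹ < ε := fun t ht =>
    inv_lt_of_inv_lt₀ hε (hNa.trans_le (by gcongr))
  refine ⟨h, hhS, fun x => ⟨fun hpos => ?_, fun hneg => ?_⟩⟩
  · rw [hh]
    refine (norm_inv_one_add_exp_le (by rw [hre_smul]; positivity)).trans_lt ?_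
    rw [hre_smul]
    exact hlt _ (abs_of_pos hpos ▸ hle x (mem_univ x))
  · rw [hh]
    refine (norm_inv_one_add_exp_sub_one_le
      (by rw [hre_smul]; exact mul_neg_of_pos_of_neg hNpos hneg)).trans_lt ?_
    rw [hre_smul, ← mul_neg]
    exact hlt _ (abs_of_neg hneg ▸ hle x (mem_univ x))

lemma mem_of_forall_exists_mem_norm_sub_lt (hS : IsClosed (S : Set C(X, ℂ))) (hw : w ∈ S)
    (hre : ∀ x, (w x).re ≠ 0) {f : C(X, ℂ)}
    (hpos : ∀ ε > 0, ∃ g ∈ S, ∀ x, 0 < (w x).re → ‖g x - f x‖ < ε)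
    (hneg : ∀ ε > 0, ∃ g ∈ S, ∀ x, (w x).re < 0 → ‖g x - f x‖ < ε) : f ∈ S := by
  rw [← SetLike.mem_coe, ← hS.closure_eq, Metric.mem_closure_iff]
  intro ε hε
  obtain ⟨g₁, hg₁, hf₁⟩ := hpos (ε / 4) (by positivity)
  obtain ⟨g₂, hg₂, hf₂⟩ := hneg (ε / 4) (by positivity)
  obtain ⟨h, hh, hχ⟩ := exists_mem_norm_lt_of_re_pos_of_re_neg hS hw hre
    (show 0 < ε / 4 / (‖g₂ - g₁‖ + 1) by positivity)
  have hsmall : ∀ (c : ℂ) (x : X), ‖c‖ < ε / 4 / (‖g₂ - g₁‖ + 1) →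
      ‖c * (g₂ x - g₁ x)‖ ≤ ε / 4 := fun c x hc => by
    rw [norm_mul]
    calc ‖c‖ * ‖g₂ x - g₁ x‖ ≤ ε / 4 / (‖g₂ - g₁‖ + 1) * (‖g₂ - g₁‖ + 1) := by
          gcongr
          exact ((g₂ - g₁).norm_coe_le_norm x).trans (lt_add_one _).le
      _ = ε / 4 := div_mul_cancel₀ _ (by positivity)
  refine ⟨g₁ + h * (g₂ - g₁), add_mem hg₁ (mul_mem hh (sub_mem hg₂ hg₁)), ?_⟩
  rw [dist_comm, dist_eq_norm]
  refine ((ContinuousMap.norm_le _ (by positivity)).mpr fun x => ?_).trans_lt (half_lt_self hε)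
  rcases (hre x).lt_or_gt with hx | hx
  · calc ‖(g₁ + h * (g₂ - g₁) - f) x‖ = ‖(g₂ x - f x) + (h x - 1) * (g₂ x - g₁ x)‖ :=
          congrArg norm (show g₁ x + h x * (g₂ x - g₁ x) - f x = _ by ring)
      _ ≤ ε / 4 + ε / 4 := norm_add_le_of_le (hf₂ x hx).le (hsmall _ x ((hχ x).2 hx))
      _ = ε / 2 := by ring
  · calc ‖(g₁ + h * (g₂ - g₁) - f) x‖ = ‖(g₁ x - f x) + h x * (g₂ x - g₁ x)‖ :=
          congrArg norm (show g₁ x + h x * (g₂ x - g₁ x) - f x = _ by ring)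
      _ ≤ ε / 4 + ε / 4 := norm_add_le_of_le (hf₁ x hx).le (hsmall _ x ((hχ x).1 hx))
      _ = ε / 2 := by ring

end Separation

section TwoPieces

variable {n : ℕ} {E V₁ V₂ : Set (Fin n → ℂ)} {f : (Fin n → ℂ) → ℂ}

lemma exists_mvEval_eq_sub (u : (Fin n → ℂ) →L[ℂ] ℂ) (c : ℂ) :
    ∃ p : MvPolynomial (Fin n) ℂ, ∀ z, mvEval p z = u z - c := by
  refine ⟨∑ i, MvPolynomial.C (u (Pi.single i 1)) * MvPolynomial.X i - MvPolynomial.C c,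
    fun z => ?_⟩
  conv_rhs => rw [pi_eq_sum_univ' z, map_sum]
  simp [mvEval, mul_comm]

lemma exists_polyMap_forall_mem_norm_sub_lt [CompactSpace E] {C V : Set (Fin n → ℂ)}
    (hV : IsOpen V) (hVc : Convex ℝ V) (hf : DifferentiableOn ℂ f V) (hC : IsClosed C)
    (hCV : E ∩ C ⊆ V) {ε : ℝ} (hε : 0 < ε) :
    ∃ p, ∀ z : E, (z : Fin n → ℂ) ∈ C → ‖polyMap E p z - f z‖ < ε := by
  have : CompactSpace ↥(E ∩ C) :=
    isCompact_iff_compactSpace.mp ((isCompact_iff_compactSpace.mpr ‹_›).inter_right hC)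
  let g : C(↥(E ∩ C), ℂ) := ⟨fun z => f z, (hf.continuousOn.mono hCV).domRestrict⟩
  obtain ⟨p, hp⟩ := exists_polyMap_norm_sub_lt
    (mem_polyClosure_of_convex hV hVc hf hCV (g := g) fun _ => rfl) hε
  refine ⟨p, fun z hz => ?_⟩
  have hle := ((polyMap (E ∩ C) p - g).norm_coe_le_norm ⟨z, z.2, hz⟩).trans_lt hp
  rwa [ContinuousMap.sub_apply, polyMap_apply, ← polyMap_apply E p z] at hle

theorem mem_polyClosure_of_disjoint_convex [CompactSpace E] (hV₁ : IsOpen V₁)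
    (hV₁c : Convex ℝ V₁) (hV₂ : IsOpen V₂) (hV₂c : Convex ℝ V₂) (hdisj : Disjoint V₁ V₂)
    (hf : DifferentiableOn ℂ f (V₁ ∪ V₂)) (hE : E ⊆ V₁ ∪ V₂) {g : C(E, ℂ)}
    (hg : ∀ z : E, g z = f z) : g ∈ polyClosure E := by
  obtain ⟨u, c, hu₁, hu₂⟩ :=
    RCLike.geometric_hahn_banach_open_open (𝕜 := ℂ) hV₁c hV₁ hV₂c hV₂ hdisj
  obtain ⟨p, hp⟩ := exists_mvEval_eq_sub u c
  have hw : ∀ z : E, (polyMap E p z).re = (u z).re - c := fun z => by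
    rw [polyMap_apply, hp, Complex.sub_re, Complex.ofReal_re]
  refine mem_of_forall_exists_mem_norm_sub_lt (Subalgebra.isClosed_topologicalClosure _)
    (polyMap_mem_polyClosure E p) (fun z => ?_) (fun ε hε => ?_) fun ε hε => ?_
  · rw [hw, sub_ne_zero]
    exact (hE z.2).elim (fun hz => (hu₁ z hz).ne) fun hz => (hu₂ z hz).ne'
  · obtain ⟨q, hq⟩ := exists_polyMap_forall_mem_norm_sub_lt (E := E) (C := {z | c ≤ (u z).re}) hV₂
      hV₂c (hf.mono subset_union_right) (isClosed_le (by fun_prop) (by fun_prop))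
      (fun z hz => (hE hz.1).resolve_left fun hz₁ => (hu₁ z hz₁).not_ge hz.2) hε
    exact ⟨polyMap E q, polyMap_mem_polyClosure E q, fun z hz =>
      hg z ▸ hq z (sub_pos.mp (hw z ▸ hz)).le⟩
  · obtain ⟨q, hq⟩ := exists_polyMap_forall_mem_norm_sub_lt (E := E) (C := {z | (u z).re ≤ c}) hV₁
      hV₁c (hf.mono subset_union_left) (isClosed_le (by fun_prop) (by fun_prop))
      (fun z hz => (hE hz.1).resolve_right fun hz₂ => (hu₂ z hz₂).not_ge hz.2) hε
    exact ⟨polyMap E q, polyMap_mem_polyClosure E q, fun z hz =>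
      hg z ▸ hq z (sub_neg.mp (hw z ▸ hz)).le⟩

lemma exists_seq_tendstoLocallyUniformlyOn_mvEval {V : Set (Fin n → ℂ)} (hV : IsOpen V)
    (h : ∀ E ⊆ V, IsCompact E → ∀ ε > 0, ∃ q, ∀ z ∈ E, ‖mvEval q z - f z‖ < ε) :
    ∃ q : ℕ → MvPolynomial (Fin n) ℂ,
      TendstoLocallyUniformlyOn (fun k => mvEval (q k)) f atTop V := by
  have := hV.locallyCompactSpace
  let K : CompactExhaustion V := default
  choose q hq using fun k : ℕ => h (Subtype.val '' K k) (Subtype.coe_image_subset V _)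
    ((K.isCompact k).image continuous_subtype_val) (1 / (k + 1)) Nat.one_div_pos_of_nat
  refine ⟨q, (tendstoLocallyUniformlyOn_iff_forall_isCompact hV).mpr fun L hLV hL => ?_⟩
  obtain ⟨m, hm⟩ := K.exists_superset_of_isCompact
    (Topology.IsInducing.subtypeVal.isCompact_preimage_iff (by simpa using hLV) |>.mpr hL)
  refine Metric.tendstoUniformlyOn_iff.mpr fun ε hε => ?_
  obtain ⟨N, hN⟩ := exists_nat_one_div_lt hε
  filter_upwards [eventually_ge_atTop (max m N)] with k hk z hz
  rw [dist_comm, dist_eq_norm]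
  calc ‖mvEval (q k) z - f z‖ < 1 / (k + 1) :=
        hq k z ⟨⟨z, hLV hz⟩, K.subset (le_of_max_le_left hk) (hm hz), rfl⟩
    _ ≤ 1 / (N + 1) := Nat.one_div_le_one_div (le_of_max_le_right hk)
    _ < ε := hN

theorem exists_seq_tendstoLocallyUniformlyOn_of_disjoint_convex (hV₁ : IsOpen V₁)
    (hV₁c : Convex ℝ V₁) (hV₂ : IsOpen V₂) (hV₂c : Convex ℝ V₂) (hdisj : Disjoint V₁ V₂)
    (hf : DifferentiableOn ℂ f (V₁ ∪ V₂)) : ∃ q : ℕ → MvPolynomial (Fin n) ℂ,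
      TendstoLocallyUniformlyOn (fun k => mvEval (q k)) f atTop (V₁ ∪ V₂) := by
  refine exists_seq_tendstoLocallyUniformlyOn_mvEval (hV₁.union hV₂) fun E hEV hE ε hε => ?_
  have := isCompact_iff_compactSpace.mp hE
  let g : C(E, ℂ) := ⟨fun z => f z, (hf.continuousOn.mono hEV).domRestrict⟩
  obtain ⟨q, hq⟩ := exists_polyMap_norm_sub_lt (mem_polyClosure_of_disjoint_convex hV₁ hV₁c hV₂
    hV₂c hdisj hf hEV (g := g) fun _ => rfl) hε
  refine ⟨q, fun z hz => ?_⟩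
  have hle := ((polyMap E q - g).norm_coe_le_norm ⟨z, hz⟩).trans_lt hq
  rwa [ContinuousMap.sub_apply, polyMap_apply] at hle

end TwoPieces

section Baire

lemma baireSpace_of_isInducing_isClosed_range {X Y : Type*} [TopologicalSpace X] [UniformSpace Y]
    [CompleteSpace Y] [(uniformity Y).IsCountablyGenerated] {J : X → Y} (hJ : IsInducing J)
    (hrange : IsClosed (range J)) : BaireSpace X := by
  let u : UniformSpace X := UniformSpace.comap J inferInstance
  have huniform : IsUniformInducing J := ⟨rfl⟩
  have : CompleteSpace X := huniform.completeSpace hrange.isComplete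
  have : (uniformity X).IsCountablyGenerated := inferInstanceAs (comap _ _).IsCountablyGenerated
  have hbaire : @BaireSpace X u.toTopologicalSpace := inferInstance
  rwa [hJ.eq_induced]

end Baire

section CompactConvergence

variable {X Y ι : Type*} [TopologicalSpace X] [UniformSpace Y] {l : Filter ι} {S : Set X}

lemma tendsto_iff_forall_subset_tendstoUniformlyOn {G : ι → C(S, Y)} {g : C(S, Y)}
    {F : ι → X → Y} {f : X → Y} (hG : ∀ k z, G k z = F k z) (hg : ∀ z, g z = f z) :
    Tendsto G l (𝓝 g) ↔ ∀ L ⊆ S, IsCompact L → TendstoUniformlyOn F f l L := by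
  rw [ContinuousMap.tendsto_iff_forall_isCompact_tendstoUniformlyOn]
  refine ⟨fun h L hLS hL u hu => ?_, fun h L hL u hu => ?_⟩
  · have hpreimage : IsCompact (Subtype.val ⁻¹' L : Set S) :=
      (IsInducing.subtypeVal.isCompact_preimage_iff (by simpa using hLS)).mpr hL
    filter_upwards [h _ hpreimage u hu] with k hk z hz
    simpa only [hG, hg] using hk ⟨z, hLS hz⟩ hz
  · filter_upwards [h _ (Subtype.coe_image_subset S L) (hL.image continuous_subtype_val) u hu]
      with k hk z hz
    simpa only [hG, hg] using hk z (mem_image_of_mem _ hz)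

end CompactConvergence

section Jet

variable {n : ℕ} {Ω : Set (Fin n → ℂ)}

/-- The family of all partial derivatives of `f ∈ A^∞(Ω)`, extended to the closure of `Ω`. -/
def jet (f : AinfSpace n Ω) (ℓ : Fin n → ℕ) : C(closure Ω, ℂ) :=
  ⟨(closure Ω).domRestrict (AinfExt f ℓ), (AinfExt_continuousOn f ℓ).domRestrict⟩

lemma isInducing_jet : IsInducing (jet (n := n) (Ω := Ω)) := ⟨rfl⟩

lemma jet_apply (f : AinfSpace n Ω) (ℓ : Fin n → ℕ) (z : closure Ω) :
    jet f ℓ z = AinfExt f ℓ z := rfl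

lemma jet_eq_of_forall_mem (f : AinfSpace n Ω) {ℓ : Fin n → ℕ} {g : C(closure Ω, ℂ)}
    (hg : ∀ z : closure Ω, z.1 ∈ Ω → g z = Dml ℓ f.1 z) : jet f ℓ = g := by
  have hdense : Dense (Subtype.val ⁻¹' Ω : Set (closure Ω)) := by
    rw [Subtype.dense_iff, Subtype.image_preimage_coe, inter_eq_right.mpr subset_closure]
  refine DFunLike.coe_injective ((jet f ℓ).continuous.ext_on hdense g.continuous fun z hz => ?_)
  exact (AinfExt_eqOn f ℓ hz).trans (hg z hz).symm

lemma tendstoLocallyUniformlyOn_of_tendsto_jet {ι : Type*} {l : Filter ι} (hΩ : IsOpen Ω)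
    {F : ι → AinfSpace n Ω} {G : (Fin n → ℕ) → C(closure Ω, ℂ)}
    (hG : Tendsto (fun k => jet (F k)) l (𝓝 G)) :
    TendstoLocallyUniformlyOn (fun k => (F k).1) (Function.extend Subtype.val (G 0) 0) l Ω := by
  have hzero := (tendsto_iff_forall_subset_tendstoUniformlyOn (fun k z => jet_apply (F k) 0 z)
    fun z => (Subtype.val_injective.extend_apply (G 0) 0 z).symm).mp (tendsto_pi_nhds.mp hG 0)
  refine (tendstoLocallyUniformlyOn_iff_forall_isCompact hΩ).mpr fun L hLΩ hL => ?_
  refine (hzero L (hLΩ.trans subset_closure) hL).congr (Eventually.of_forall fun k z hz => ?_)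
  exact (AinfExt_eqOn (F k) 0 (hLΩ hz)).trans (congrFun (Dml_zero _) z)

lemma isClosed_range_jet (hΩ : IsOpen Ω) : IsClosed (range (jet (n := n) (Ω := Ω))) := by
  have : LocallyCompactSpace (closure Ω) := isClosed_closure.locallyCompactSpace
  refine isClosed_of_closure_subset fun G hG => ?_
  obtain ⟨_, hF, hlim⟩ := mem_closure_iff_seq_limit.mp hG
  choose F hF using hF
  obtain rfl := funext hF
  set f : (Fin n → ℂ) → ℂ := Function.extend Subtype.val (G 0) 0
  have hf : TendstoLocallyUniformlyOn (fun k => (F k).1) f atTop Ω :=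
    tendstoLocallyUniformlyOn_of_tendsto_jet hΩ hlim
  have hd : ∀ᶠ k in atTop, DifferentiableOn ℂ (F k).1 Ω := Eventually.of_forall fun k => (F k).2.1
  have hGf : ∀ ℓ (z : closure Ω), z.1 ∈ Ω → G ℓ z = Dml ℓ f z := fun ℓ z hz => by
    refine tendsto_nhds_unique (((continuous_eval_const z).tendsto _).comp
      (tendsto_pi_nhds.mp hlim ℓ)) ?_
    exact ((tendstoLocallyUniformlyOn_Dml hΩ hf hd ℓ).tendsto_at hz).congr fun k =>
      (AinfExt_eqOn (F k) ℓ hz).symm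
  have hmem : AinfMem n Ω f := by
    refine ⟨differentiableOn_of_tendstoLocallyUniformlyOn hΩ hf hd, fun ℓ =>
      ⟨Function.extend Subtype.val (G ℓ) 0, ?_, fun z hz => ?_⟩⟩
    · rw [continuousOn_iff_continuous_domRestrict]
      exact (G ℓ).continuous.congr fun z => (Subtype.val_injective.extend_apply _ _ z).symm
    · exact (Subtype.val_injective.extend_apply (G ℓ) 0 ⟨z, subset_closure hz⟩).trans
        (hGf ℓ ⟨z, subset_closure hz⟩ hz)
  exact ⟨⟨f, hmem⟩, funext fun ℓ => jet_eq_of_forall_mem _ (hGf ℓ)⟩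

lemma baireSpace_ainfSpace (hΩ : IsOpen Ω) : BaireSpace (AinfSpace n Ω) := by
  have : LocallyCompactSpace (closure Ω) := isClosed_closure.locallyCompactSpace
  exact baireSpace_of_isInducing_isClosed_range isInducing_jet (isClosed_range_jet hΩ)

end Jet

section JointApproximation

variable {n : ℕ} {K S V V₁ V₂ : Set (Fin n → ℂ)} {f : (Fin n → ℂ) → ℂ}

/-- The family of all partial derivatives of a polynomial, restricted to `S`. -/
def polyJet (S : Set (Fin n → ℂ)) : MvPolynomial (Fin n) ℂ →ₗ[ℂ] (Fin n → ℕ) → C(S, ℂ) :=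
  LinearMap.pi fun ℓ => (polyMap S).toLinearMap ∘ₗ polyDeriv ℓ

lemma polyJet_apply (S : Set (Fin n → ℂ)) (p : MvPolynomial (Fin n) ℂ) (ℓ : Fin n → ℕ) (z : S) :
    polyJet S p ℓ z = Dml ℓ (mvEval p) z := by
  rw [Dml_mvEval, ← polyMap_apply]
  rfl

/-- The pair `(p|K, (D^ℓ p|S)_ℓ)` attached to a polynomial `p`, for simultaneous approximation in
`C(K)` and in the topology of `A^∞` on `S`. -/
def jointPolyMap (K S : Set (Fin n → ℂ)) :
    MvPolynomial (Fin n) ℂ →ₗ[ℂ] C(K, ℂ) × ((Fin n → ℕ) → C(S, ℂ)) :=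
  (polyMap K).toLinearMap.prod (polyJet S)

variable {ι : Type*} {l : Filter ι} {q : ι → MvPolynomial (Fin n) ℂ} {g : C(K, ℂ)}
  {G : (Fin n → ℕ) → C(S, ℂ)}

lemma tendsto_jointPolyMap_iff {φ : (Fin n → ℂ) → ℂ} {Γ : (Fin n → ℕ) → (Fin n → ℂ) → ℂ}
    (hg : ∀ z, g z = φ z) (hG : ∀ ℓ z, G ℓ z = Γ ℓ z) :
    Tendsto (fun k => jointPolyMap K S (q k)) l (𝓝 (g, G)) ↔
      (∀ L ⊆ K, IsCompact L → TendstoUniformlyOn (fun k => mvEval (q k)) φ l L) ∧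
        ∀ ℓ, ∀ L ⊆ S, IsCompact L →
          TendstoUniformlyOn (fun k => Dml ℓ (mvEval (q k))) (Γ ℓ) l L := by
  rw [Prod.tendsto_iff, tendsto_pi_nhds]
  exact and_congr
    (tendsto_iff_forall_subset_tendstoUniformlyOn (fun k => polyMap_apply K (q k)) hg)
    (forall_congr' fun ℓ =>
      tendsto_iff_forall_subset_tendstoUniformlyOn (fun k => polyJet_apply S (q k) ℓ) (hG ℓ))

lemma tendsto_jointPolyMap [l.NeBot] (hV : IsOpen V)
    (hq : TendstoLocallyUniformlyOn (fun k => mvEval (q k)) f l V) (hK : K ⊆ V) (hS : S ⊆ V)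
    (hg : ∀ z, g z = f z) (hG : ∀ ℓ z, G ℓ z = Dml ℓ f z) :
    Tendsto (fun k => jointPolyMap K S (q k)) l (𝓝 (g, G)) := by
  have hd : ∀ᶠ k in l, DifferentiableOn ℂ (mvEval (q k)) V :=
    Eventually.of_forall fun k => (differentiable_mvEval (q k)).differentiableOn
  have hcompact : ∀ {F : ι → (Fin n → ℂ) → ℂ} {f : (Fin n → ℂ) → ℂ},
      TendstoLocallyUniformlyOn F f l V → ∀ L ⊆ V, IsCompact L → TendstoUniformlyOn F f l L :=
    (tendstoLocallyUniformlyOn_iff_forall_isCompact hV).mp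
  exact (tendsto_jointPolyMap_iff hg hG).mpr ⟨fun L hL => hcompact hq L (hL.trans hK),
    fun ℓ L hL => hcompact (tendstoLocallyUniformlyOn_Dml hV hq hd ℓ) L (hL.trans hS)⟩

lemma mem_closure_range_jointPolyMap_of_disjoint_convex (hV₁ : IsOpen V₁)
    (hV₁c : Convex ℝ V₁) (hV₂ : IsOpen V₂) (hV₂c : Convex ℝ V₂) (hdisj : Disjoint V₁ V₂)
    (hf : DifferentiableOn ℂ f V₁) (hK : K ⊆ V₂) (hS : S ⊆ V₁) (P : MvPolynomial (Fin n) ℂ)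
    (hG : ∀ ℓ z, G ℓ z = Dml ℓ f z) :
    (polyMap K P, G) ∈ closure (range (jointPolyMap K S)) := by
  classical
  have hleft : EqOn (V₁.piecewise f (mvEval P)) f V₁ := piecewise_eqOn _ _ _
  have hright : EqOn (V₁.piecewise f (mvEval P)) (mvEval P) V₂ := fun z hz =>
    piecewise_eq_of_notMem _ _ _ (disjoint_right.mp hdisj hz)
  obtain ⟨q, hq⟩ := exists_seq_tendstoLocallyUniformlyOn_of_disjoint_convex hV₁ hV₁c hV₂ hV₂c hdisj
    ((hf.congr hleft).union_of_isOpen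
      ((differentiable_mvEval P).differentiableOn.congr hright) hV₁ hV₂)
  refine mem_closure_of_tendsto (tendsto_jointPolyMap (hV₁.union hV₂) hq
    (hK.trans subset_union_right) (hS.trans subset_union_left) (fun z => ?_) fun ℓ z => ?_)
    (Eventually.of_forall fun k => mem_range_self (q k))
  · rw [polyMap_apply, hright (hK z.2)]
  · rw [hG, eqOn_Dml hV₁ hleft ℓ (hS z.2)]

end JointApproximation

section Dilation

variable {n : ℕ} {Ω K : Set (Fin n → ℂ)} {x : Fin n → ℂ}

/-- The derivatives of the dilation `z ↦ f (x + r (z - x))` on the closure of `Ω`. -/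
def dilatedJet (x : Fin n → ℂ) (f : AinfSpace n Ω) (r : ℝ) (ℓ : Fin n → ℕ) : C(closure Ω, ℂ) :=
  (r : ℂ) ^ (indexList ℓ).length • dilate (closure Ω) x (AinfExt f ℓ) r

lemma add_smul_sub_mem_closure (hΩc : Convex ℝ Ω) (hx : x ∈ Ω) {r : ℝ} (hr : r ∈ Icc (0 : ℝ) 1)
    {z : Fin n → ℂ} (hz : z ∈ closure Ω) : x + (r : ℂ) • (z - x) ∈ closure Ω := by
  rw [Complex.coe_smul]
  exact hΩc.closure.add_smul_sub_mem (subset_closure hx) hz hr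

lemma add_smul_sub_mem_of_lt_one (hΩ : IsOpen Ω) (hΩc : Convex ℝ Ω) (hx : x ∈ Ω) {r : ℝ}
    (hr : r ∈ Ico (0 : ℝ) 1) {z : Fin n → ℂ} (hz : z ∈ closure Ω) :
    x + (r : ℂ) • (z - x) ∈ Ω := by
  have hmem := hΩc.add_smul_sub_mem_interior' hz (hΩ.interior_eq.symm ▸ hx)
    (show 1 - r ∈ Ioc (0 : ℝ) 1 from ⟨sub_pos.mpr hr.2, sub_le_self _ hr.1⟩)
  rw [hΩ.interior_eq] at hmem
  convert hmem using 1
  rw [Complex.coe_smul]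
  module

lemma continuousOn_dilatedJet (hΩc : Convex ℝ Ω) (hx : x ∈ Ω) (f : AinfSpace n Ω) :
    ContinuousOn (dilatedJet x f) (Icc 0 1) := by
  refine continuousOn_pi.mpr fun ℓ => (Complex.continuous_ofReal.pow _).continuousOn.smul ?_
  refine (continuousOn_dilate (V := (↑) '' Icc (0 : ℝ) 1) (AinfExt_continuousOn f ℓ) ?_).comp
    Complex.continuous_ofReal.continuousOn (mapsTo_image _ _)
  rintro _ ⟨r, hr, rfl⟩ z hz
  exact add_smul_sub_mem_closure hΩc hx hr hz

lemma dilatedJet_one (x : Fin n → ℂ) (f : AinfSpace n Ω) : dilatedJet x f 1 = jet f := by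
  funext ℓ
  ext z
  have happly : dilate (closure Ω) x (AinfExt f ℓ) 1 z = AinfExt f ℓ z := by
    rw [dilate_apply (AinfExt_continuousOn f ℓ) (by simp), one_smul, add_sub_cancel]
  simp [dilatedJet, jet_apply, happly]

lemma dilatedJet_apply (hΩ : IsOpen Ω) (hΩc : Convex ℝ Ω) (hx : x ∈ Ω) (f : AinfSpace n Ω) {r : ℝ}
    (hr : r ∈ Ico (0 : ℝ) 1) (ℓ : Fin n → ℕ) (z : closure Ω) :
    dilatedJet x f r ℓ z = Dml ℓ (fun w => f.1 (x + (r : ℂ) • (w - x))) z := by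
  have hmem := add_smul_sub_mem_of_lt_one hΩ hΩc hx hr z.2
  have haffine : (fun w => f.1 (x + (r : ℂ) • (w - x))) =
      fun w => f.1 ((x - (r : ℂ) • x) + (r : ℂ) • w) := by
    funext w
    exact congrArg f.1 (by module)
  rw [haffine, Dml_comp_affine, dilatedJet, ContinuousMap.smul_apply,
    dilate_apply (AinfExt_continuousOn f ℓ)
      (fun w hw => subset_closure (add_smul_sub_mem_of_lt_one hΩ hΩc hx hr hw)),
    AinfExt_eqOn f ℓ hmem, Pi.smul_apply]
  congr 2
  module

lemma convex_preimage_add_smul_sub (hΩc : Convex ℝ Ω) (x : Fin n → ℂ) (r : ℝ) :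
    Convex ℝ ((fun z => x + (r : ℂ) • (z - x)) ⁻¹' Ω) := by
  have hhomothety : (fun z => x + (r : ℂ) • (z - x)) = AffineMap.homothety x r := funext fun z => by
    rw [AffineMap.homothety_apply, vsub_eq_sub, vadd_eq_add, add_comm, Complex.coe_smul]
  rw [hhomothety]
  exact hΩc.affine_preimage _

lemma mem_closure_range_jointPolyMap_dilatedJet (hΩ : IsOpen Ω) (hΩc : Convex ℝ Ω) (hx : x ∈ Ω)
    (hK : IsCompact K) (hKc : Convex ℝ K) (hdisj : Disjoint K (closure Ω)) (f : AinfSpace n Ω)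
    (P : MvPolynomial (Fin n) ℂ) {r : ℝ} (hr : r ∈ Ico (0 : ℝ) 1) :
    (polyMap K P, dilatedJet x f r) ∈ closure (range (jointPolyMap K (closure Ω))) := by
  obtain ⟨H₂, H₁, hH₂, hH₁, hH₂c, hH₁c, hKH, hΩH, hH⟩ :=
    hdisj.exists_open_convexes hKc hK hΩc.closure isClosed_closure
  let D : Set (Fin n → ℂ) := (fun z => x + (r : ℂ) • (z - x)) ⁻¹' Ω
  have hD : IsOpen D := hΩ.preimage (by fun_prop)
  have hf : DifferentiableOn ℂ (fun z => f.1 (x + (r : ℂ) • (z - x))) (D ∩ H₁) :=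
    f.2.1.comp (by fun_prop) fun z hz => hz.1
  exact mem_closure_range_jointPolyMap_of_disjoint_convex (hD.inter hH₁)
    ((convex_preimage_add_smul_sub hΩc x r).inter hH₁c) hH₂ hH₂c
    (hH.symm.mono_left inter_subset_right) hf hKH
    (fun z hz => ⟨add_smul_sub_mem_of_lt_one hΩ hΩc hx hr hz, hΩH hz⟩) P
    (dilatedJet_apply hΩ hΩc hx f hr)

theorem mem_closure_range_jointPolyMap (hΩ : IsOpen Ω) (hΩc : Convex ℝ Ω) (hx : x ∈ Ω)
    (hK : IsCompact K) (hKc : Convex ℝ K) (hdisj : Disjoint K (closure Ω)) (f : AinfSpace n Ω)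
    (P : MvPolynomial (Fin n) ℂ) :
    (polyMap K P, jet f) ∈ closure (range (jointPolyMap K (closure Ω))) := by
  have hcontinuous : ContinuousWithinAt (fun r => (polyMap K P, dilatedJet x f r)) (Ico 0 1) 1 :=
    (continuousWithinAt_const.prodMk
      (continuousOn_dilatedJet hΩc hx f 1 (right_mem_Icc.mpr zero_le_one))).mono Ico_subset_Icc_self
  have hone : (1 : ℝ) ∈ closure (Ico 0 1) := by
    rw [closure_Ico zero_ne_one]
    exact right_mem_Icc.mpr zero_le_one
  simpa only [closure_closure, dilatedJet_one] using hcontinuous.mem_closure hone fun r =>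
    mem_closure_range_jointPolyMap_dilatedJet hΩ hΩc hx hK hKc hdisj f P

end Dilation

section UniversalityCriterion

variable {X Y T ι : Type*} [TopologicalSpace X] [UniformSpace Y] {s : Set ι} {Φ : ι → X → Y}

lemma isOpen_setOf_exists_mem {c : X → Y} {V : SetRel Y Y} (hc : Continuous c)
    (hΦ : ∀ i ∈ s, Continuous (Φ i)) (hV : IsOpen V) :
    IsOpen {x | ∃ i ∈ s, (c x, Φ i x) ∈ V} := by
  have hunion : {x | ∃ i ∈ s, (c x, Φ i x) ∈ V} = ⋃ i ∈ s, (fun x => (c x, Φ i x)) ⁻¹' V := by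
    ext x
    simp
  rw [hunion]
  exact isOpen_biUnion fun i hi => hV.preimage (hc.prodMk (hΦ i hi))

lemma dense_setOf_exists_mem {c : X → Y} {V : SetRel Y Y} (hc : Continuous c)
    (hgraph : ∀ x, (x, c x) ∈ closure {q : X × Y | ∃ i ∈ s, Φ i q.1 = q.2})
    (hV : V ∈ uniformity Y) (hVo : IsOpen V) : Dense {x | ∃ i ∈ s, (c x, Φ i x) ∈ V} := by
  intro x
  refine mem_closure_iff.mpr fun O hO hx => ?_
  obtain ⟨⟨x', y⟩, ⟨hx'O, hx'V⟩, i, hi, hy⟩ := mem_closure_iff.mp (hgraph x)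
    (Prod.fst ⁻¹' O ∩ (fun q => (c q.1, q.2)) ⁻¹' V)
    ((hO.preimage continuous_fst).inter (hVo.preimage (by fun_prop))) ⟨hx, refl_mem_uniformity hV⟩
  obtain rfl : Φ i x' = y := hy
  exact ⟨x', hx'O, i, hi, hx'V⟩

theorem isGδ_and_dense_setOf_mem_closure [BaireSpace X] [(uniformity Y).IsCountablyGenerated]
    {c : X → Y} (hc : Continuous c) (hΦ : ∀ i ∈ s, Continuous (Φ i))
    (hgraph : ∀ x, (x, c x) ∈ closure {q : X × Y | ∃ i ∈ s, Φ i q.1 = q.2}) :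
    IsGδ {x | c x ∈ closure ((Φ · x) '' s)} ∧ Dense {x | c x ∈ closure ((Φ · x) '' s)} := by
  obtain ⟨V, hV, hbasis⟩ := uniformity_hasBasis_open.exists_antitone_subbasis (α := Y × Y)
  have hInter : {x | c x ∈ closure ((Φ · x) '' s)} = ⋂ k, {x | ∃ i ∈ s, (c x, Φ i x) ∈ V k} := by
    ext x
    rw [mem_ofPred_eq, mem_closure_iff_nhds_basis (nhds_basis_uniformity' hbasis.toHasBasis)]
    simp only [exists_mem_image, forall_const, mem_iInter]
    rfl
  have hopen : ∀ k, IsOpen {x | ∃ i ∈ s, (c x, Φ i x) ∈ V k} := fun k =>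
    isOpen_setOf_exists_mem hc hΦ (hV k).2
  rw [hInter]
  exact ⟨.iInter_of_isOpen hopen,
    dense_iInter_of_isOpen hopen fun k => dense_setOf_exists_mem hc hgraph (hV k).1 (hV k).2⟩

theorem isGδ_and_dense_setOf_forall_mem_closure [BaireSpace X] [TopologicalSpace T]
    [TopologicalSpace.SeparableSpace T] [(uniformity Y).IsCountablyGenerated] {c : T → X → Y}
    (hcx : ∀ t, Continuous (c t)) (hct : ∀ x, Continuous (c · x))
    (hΦ : ∀ i ∈ s, Continuous (Φ i))
    (hgraph : ∀ t x, (x, c t x) ∈ closure {q : X × Y | ∃ i ∈ s, Φ i q.1 = q.2}) :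
    IsGδ {x | ∀ t, c t x ∈ closure ((Φ · x) '' s)} ∧
      Dense {x | ∀ t, c t x ∈ closure ((Φ · x) '' s)} := by
  obtain ⟨D, hDcount, hD⟩ := TopologicalSpace.exists_countable_dense T
  have hInter : {x | ∀ t, c t x ∈ closure ((Φ · x) '' s)} =
      ⋂ t ∈ D, {x | c t x ∈ closure ((Φ · x) '' s)} := by
    ext x
    rw [mem_iInter₂]
    exact ⟨fun h t _ => h t, fun h t =>
      (isClosed_closure.preimage (hct x)).closure_subset_iff.mpr h (hD t)⟩
  rw [hInter]
  have hcrit := fun t => isGδ_and_dense_setOf_mem_closure (hcx t) hΦ (hgraph t)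
  exact ⟨.biInter hDcount fun t _ => (hcrit t).1,
    dense_biInter_of_Gδ (fun t _ => (hcrit t).1) hDcount fun t _ => (hcrit t).2⟩

end UniversalityCriterion

section ConvexExhaustion

variable {E : Type*} [SeminormedAddCommGroup E] [NormedSpace ℝ E]

lemma exists_finite_subset_cthickening {M : Type*} [PseudoMetricSpace M] {D K : Set M}
    (hD : Dense D) (hK : IsCompact K) {r : ℝ} (hr : 0 < r) :
    ∃ t : Set M, t.Finite ∧ t ⊆ D ∧ K ⊆ Metric.cthickening r t ∧ t ⊆ Metric.cthickening r K := by
  have hcover : K ⊆ ⋃ a ∈ D, Metric.ball a r := fun z _ => by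
    obtain ⟨a, ha, hza⟩ := hD.exists_dist_lt z hr
    exact mem_iUnion₂.mpr ⟨a, ha, hza⟩
  obtain ⟨t, htD, ht, hKt⟩ :=
    hK.elim_finite_subcover_image (fun _ _ => Metric.isOpen_ball) hcover
  refine ⟨{a ∈ t | (Metric.ball a r ∩ K).Nonempty}, ht.subset (sep_subset _ _),
    (sep_subset _ _).trans htD, fun z hz => ?_, ?_⟩
  · obtain ⟨a, hat, hza⟩ := mem_iUnion₂.mp (hKt hz)
    exact Metric.mem_cthickening_of_dist_le z a r _ ⟨hat, z, hza, hz⟩ (Metric.mem_ball.mp hza).le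
  · rintro a ⟨-, z, hza, hzK⟩
    exact Metric.mem_cthickening_of_dist_le a z r K hzK (Metric.mem_ball'.mp hza).le

lemma exists_finite_subset_cthickening_convexHull {D K O : Set E} (hD : Dense D)
    (hK : IsCompact K) (hKc : Convex ℝ K) (hO : IsOpen O) (hKO : K ⊆ O) :
    ∃ t : Set E, ∃ m : ℕ, t.Finite ∧ t ⊆ D ∧
      K ⊆ Metric.cthickening (1 / ((m : ℝ) + 1)) (convexHull ℝ t) ∧
      Metric.cthickening (1 / ((m : ℝ) + 1)) (convexHull ℝ t) ⊆ O := by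
  obtain ⟨δ, hδ, hδO⟩ := hK.exists_cthickening_subset_open hO hKO
  obtain ⟨m, hm⟩ := exists_nat_one_div_lt (half_pos hδ)
  set r : ℝ := 1 / ((m : ℝ) + 1)
  have hr : 0 < r := Nat.one_div_pos_of_nat
  obtain ⟨t, ht, htD, hKt, htK⟩ := exists_finite_subset_cthickening hD hK hr
  refine ⟨t, m, ht, htD,
    hKt.trans (Metric.cthickening_subset_of_subset r (subset_convexHull ℝ _)), ?_⟩
  calc Metric.cthickening r (convexHull ℝ t)
      ⊆ Metric.cthickening r (Metric.cthickening r K) :=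
        Metric.cthickening_subset_of_subset r (convexHull_min htK (hKc.cthickening r))
    _ ⊆ Metric.cthickening (r + r) K := Metric.cthickening_cthickening_subset hr.le hr.le K
    _ ⊆ Metric.cthickening δ K := Metric.cthickening_mono (by linarith) K
    _ ⊆ O := hδO

theorem exists_countable_isCompact_convex [ProperSpace E] :
    ∃ 𝒦 : Set (Set E), 𝒦.Countable ∧ (∀ C ∈ 𝒦, IsCompact C ∧ Convex ℝ C) ∧
      ∀ K O, IsCompact K → Convex ℝ K → IsOpen O → K ⊆ O → ∃ C ∈ 𝒦, K ⊆ C ∧ C ⊆ O := by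
  obtain ⟨D, hDcount, hD⟩ := TopologicalSpace.exists_countable_dense E
  let thickHull : Set E × ℕ → Set E := fun i =>
    Metric.cthickening (1 / ((i.2 : ℝ) + 1)) (convexHull ℝ i.1)
  refine ⟨thickHull '' ({t | t.Finite ∧ t ⊆ D} ×ˢ univ),
    ((countable_ofPred_finite_subset hDcount).prod countable_univ).image _, ?_, ?_⟩
  · rintro _ ⟨⟨t, m⟩, ⟨ht, -⟩, rfl⟩
    exact ⟨(ht.1.isCompact_convexHull ℝ).cthickening, (convex_convexHull ℝ _).cthickening _⟩
  · intro K O hK hKc hO hKO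
    obtain ⟨t, m, ht, htD, hsub⟩ := exists_finite_subset_cthickening_convexHull hD hK hKc hO hKO
    exact ⟨_, mem_image_of_mem thickHull (mk_mem_prod ⟨ht, htD⟩ (mem_univ m)), hsub⟩

end ConvexExhaustion

section Universality

variable {n : ℕ} {𝕄 : Set ℕ} {Ω K : Set (Fin n → ℂ)} {Nj : ℕ → Fin n → ℕ} {ζ : Fin n → ℂ}

/-- A polynomial as an element of `A^∞(Ω)`. -/
def polyAinf (Ω : Set (Fin n → ℂ)) (p : MvPolynomial (Fin n) ℂ) : AinfSpace n Ω :=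
  ⟨mvEval p, (differentiable_mvEval p).differentiableOn, fun ℓ => ⟨Dml ℓ (mvEval p), by
    rw [Dml_mvEval]
    exact (differentiable_mvEval _).continuous.continuousOn, eqOn_refl _ _⟩⟩

lemma jet_polyAinf (Ω : Set (Fin n → ℂ)) (p : MvPolynomial (Fin n) ℂ) :
    jet (polyAinf Ω p) = polyJet (closure Ω) p :=
  funext fun ℓ => jet_eq_of_forall_mem _ fun z _ => polyJet_apply _ p ℓ z

lemma AinfExt_polyAinf (p : MvPolynomial (Fin n) ℂ) (ℓ : Fin n → ℕ) (hζ : ζ ∈ closure Ω) :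
    AinfExt (polyAinf Ω p) ℓ ζ = Dml ℓ (mvEval p) ζ := by
  rw [← polyJet_apply (closure Ω) p ℓ ⟨ζ, hζ⟩, ← jet_polyAinf, jet_apply]

/-- The Taylor partial sum `S_λ(f, ζ)` of `f ∈ A^∞(Ω)`, as a polynomial. -/
def taylorSum (Nj : ℕ → Fin n → ℕ) (ζ : Fin n → ℂ) (lam : ℕ) (f : AinfSpace n Ω) :
    MvPolynomial (Fin n) ℂ :=
  taylorPoly Nj ζ (fun ℓ => AinfExt f ℓ ζ) lam

lemma mvEval_taylorSum (Nj : ℕ → Fin n → ℕ) (ζ : Fin n → ℂ) (lam : ℕ) (f : AinfSpace n Ω) :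
    mvEval (taylorSum Nj ζ lam f) = pSumExt Nj (AinfExt f) ζ lam :=
  mvEval_taylorPoly Nj _ ζ lam

lemma eventually_taylorSum_polyAinf (hNj : Function.Bijective Nj) (hζ : ζ ∈ closure Ω)
    (p : MvPolynomial (Fin n) ℂ) : ∀ᶠ lam in atTop, taylorSum Nj ζ lam (polyAinf Ω p) = p := by
  simpa only [taylorSum, AinfExt_polyAinf _ _ hζ] using eventually_taylorPoly_eq hNj ζ p

lemma continuous_AinfExt_apply (ℓ : Fin n → ℕ) (hζ : ζ ∈ closure Ω) :
    Continuous fun f : AinfSpace n Ω => AinfExt f ℓ ζ :=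
  (continuous_eval_const (⟨ζ, hζ⟩ : closure Ω)).comp
    ((continuous_apply ℓ).comp isInducing_jet.continuous)

lemma continuous_jointPolyMap_taylorSum (K S : Set (Fin n → ℂ)) (Nj : ℕ → Fin n → ℕ)
    (hζ : ζ ∈ closure Ω) (lam : ℕ) :
    Continuous fun f : AinfSpace n Ω => jointPolyMap K S (taylorSum Nj ζ lam f) := by
  simp only [taylorSum, taylorPoly, map_sum, map_smul]
  exact continuous_finsetSum _ fun j _ => (continuous_AinfExt_apply (Nj j) hζ).smul continuous_const

/-- The universality property of `f ∈ A^∞(Ω)` on a single set `K`: along suitable `λ ∈ 𝕄`, the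
Taylor partial sums `S_λ(f, ζ)` approximate any given polynomial on `K` while converging to `f` in
`A^∞(Ω)`. -/
def IsUniversalOn (𝕄 : Set ℕ) (Nj : ℕ → Fin n → ℕ) (ζ : Fin n → ℂ) (K : Set (Fin n → ℂ))
    (f : AinfSpace n Ω) : Prop :=
  ∀ P : MvPolynomial (Fin n) ℂ, ∃ lam : ℕ → ℕ, (∀ N, lam N ∈ 𝕄) ∧
    TendstoUniformlyOn (fun N => pSumExt Nj (AinfExt f) ζ (lam N)) (mvEval P) atTop K ∧
    ∀ ℓ : Fin n → ℕ, ∀ L ⊆ closure Ω, IsCompact L →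
      TendstoUniformlyOn (fun N => Dml ℓ (pSumExt Nj (AinfExt f) ζ (lam N))) (AinfExt f ℓ) atTop L

lemma IsUniversalOn.mono {C : Set (Fin n → ℂ)} {f : AinfSpace n Ω}
    (hf : IsUniversalOn 𝕄 Nj ζ C f) (hKC : K ⊆ C) : IsUniversalOn 𝕄 Nj ζ K f := fun P => by
  obtain ⟨lam, hlam, hC, hΩ⟩ := hf P
  exact ⟨lam, hlam, hC.mono hKC, hΩ⟩

lemma isUniversalOn_iff_forall_mem_closure (hK : IsCompact K) (f : AinfSpace n Ω) :
    IsUniversalOn 𝕄 Nj ζ K f ↔ ∀ P, (polyMap K P, jet f) ∈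
      closure ((fun lam => jointPolyMap K (closure Ω) (taylorSum Nj ζ lam f)) '' 𝕄) := by
  have : CompactSpace K := isCompact_iff_compactSpace.mp hK
  have : LocallyCompactSpace (closure Ω) := isClosed_closure.locallyCompactSpace
  have htendsto (P) (lam : ℕ → ℕ) :=
    tendsto_jointPolyMap_iff (K := K) (l := atTop) (q := fun N => taylorSum Nj ζ (lam N) f)
      (polyMap_apply K P) (jet_apply f)
  simp only [mvEval_taylorSum] at htendsto
  refine forall_congr' fun P => ?_
  rw [mem_closure_iff_seq_limit]
  constructor
  · rintro ⟨lam, hlam, hPK, hfΩ⟩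
    exact ⟨_, fun N => mem_image_of_mem _ (hlam N),
      (htendsto P lam).mpr ⟨fun L hL _ => hPK.mono hL, hfΩ⟩⟩
  · rintro ⟨_, hmem, hlim⟩
    choose lam hlam hx using hmem
    obtain rfl := funext hx
    obtain ⟨hPK, hfΩ⟩ := (htendsto P lam).mp hlim
    exact ⟨lam, hlam, hPK K subset_rfl hK, hfΩ⟩

lemma mk_mem_closure_setOf_jointPolyMap_eq (h𝕄 : 𝕄.Infinite) (hNj : Function.Bijective Nj)
    (hζ : ζ ∈ closure Ω) {f : AinfSpace n Ω} {g : C(K, ℂ)}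
    (hg : (g, jet f) ∈ closure (range (jointPolyMap K (closure Ω)))) :
    (f, (g, jet f)) ∈ closure {q : AinfSpace n Ω × C(K, ℂ) × ((Fin n → ℕ) → C(closure Ω, ℂ)) |
      ∃ lam ∈ 𝕄, jointPolyMap K (closure Ω) (taylorSum Nj ζ lam q.1) = q.2} := by
  rw [(isInducing_jet.prodMap IsInducing.id).closure_eq_preimage_closure_image]
  refine map_mem_closure (f := fun q => (q.2, q)) (by fun_prop) hg ?_
  rintro _ ⟨p, rfl⟩
  obtain ⟨lam, hlam, hp⟩ := ((Nat.frequently_atTop_iff_infinite.mpr h𝕄).and_eventually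
    (eventually_taylorSum_polyAinf hNj hζ p)).exists
  exact ⟨(polyAinf Ω p, jointPolyMap K (closure Ω) p), ⟨lam, hlam, congrArg _ hp⟩,
    Prod.ext (jet_polyAinf Ω p) rfl⟩

theorem isGδ_and_dense_setOf_isUniversalOn (h𝕄 : 𝕄.Infinite) (hΩ : IsOpen Ω) (hΩc : Convex ℝ Ω)
    (hNj : Function.Bijective Nj) (hζ : ζ ∈ closure Ω) (hK : IsCompact K) (hKc : Convex ℝ K)
    (hdisj : Disjoint K (closure Ω)) :
    IsGδ {f : AinfSpace n Ω | IsUniversalOn 𝕄 Nj ζ K f} ∧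
      Dense {f : AinfSpace n Ω | IsUniversalOn 𝕄 Nj ζ K f} := by
  have : CompactSpace K := isCompact_iff_compactSpace.mp hK
  have : LocallyCompactSpace (closure Ω) := isClosed_closure.locallyCompactSpace
  have : BaireSpace (AinfSpace n Ω) := baireSpace_ainfSpace hΩ
  obtain ⟨x, hx⟩ := closure_nonempty_iff.mp ⟨ζ, hζ⟩
  have hcrit := isGδ_and_dense_setOf_forall_mem_closure (X := AinfSpace n Ω) (s := 𝕄)
    (Φ := fun lam f => jointPolyMap K (closure Ω) (taylorSum Nj ζ lam f))
    (c := fun (g : range (polyMap K)) f => (g.1, jet f))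
    (fun _ => continuous_const.prodMk isInducing_jet.continuous)
    (fun _ => continuous_subtype_val.prodMk continuous_const)
    (fun lam _ => continuous_jointPolyMap_taylorSum K (closure Ω) Nj hζ lam) (by
      rintro ⟨_, P, rfl⟩ f
      exact mk_mem_closure_setOf_jointPolyMap_eq h𝕄 hNj hζ
        (mem_closure_range_jointPolyMap hΩ hΩc hx hK hKc hdisj f P))
  simpa only [Subtype.forall, forall_mem_range, ← isUniversalOn_iff_forall_mem_closure hK]
    using hcrit

end Universality

/-- Theorem 3.3: universal Taylor series in `A^∞(Ω)` with center
`ζ` in the closure of `Ω`; the set of universal functions is a nonempty dense `G_δ`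
subset of `A^∞(Ω)`. -/
theorem thm3_3 (n : ℕ) (𝕄 : Set ℕ) (h𝕄 : 𝕄.Infinite)
    (Ω : Set (Fin n → ℂ)) (hΩo : IsOpen Ω) (hΩcv : Convex ℝ Ω)
    (ζ : Fin n → ℂ) (hζ : ζ ∈ closure Ω)
    (Nj : ℕ → Fin n → ℕ) (hNj : Function.Bijective Nj) :
    ∃ U : Set (AinfSpace n Ω),
      U = {f : AinfSpace n Ω |
        ∀ K : Set (Fin n → ℂ), IsCompact K → Convex ℝ K → K ∩ closure Ω = ∅ →
          ∀ P : MvPolynomial (Fin n) ℂ, ∃ lam : ℕ → ℕ, (∀ N, lam N ∈ 𝕄) ∧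
            TendstoUniformlyOn (fun N => pSumExt Nj (AinfExt f) ζ (lam N)) (mvEval P)
              atTop K ∧
            ∀ ℓ : Fin n → ℕ, ∀ L : Set (Fin n → ℂ), L ⊆ closure Ω → IsCompact L →
              TendstoUniformlyOn (fun N => Dml ℓ (pSumExt Nj (AinfExt f) ζ (lam N)))
                (AinfExt f ℓ) atTop L} ∧
      U.Nonempty ∧ Dense U ∧ IsGδ U := by
  obtain ⟨𝒦, h𝒦count, h𝒦, hcofinal⟩ := exists_countable_isCompact_convex (E := Fin n → ℂ)
  let 𝒞 : Set (Set (Fin n → ℂ)) := {C ∈ 𝒦 | Disjoint C (closure Ω)}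
  have h𝒞count : 𝒞.Countable := h𝒦count.mono (sep_subset _ _)
  have hcrit : ∀ C ∈ 𝒞, IsGδ {f : AinfSpace n Ω | IsUniversalOn 𝕄 Nj ζ C f} ∧
      Dense {f : AinfSpace n Ω | IsUniversalOn 𝕄 Nj ζ C f} := fun C hC =>
    isGδ_and_dense_setOf_isUniversalOn h𝕄 hΩo hΩcv hNj hζ (h𝒦 C hC.1).1 (h𝒦 C hC.1).2 hC.2
  have : BaireSpace (AinfSpace n Ω) := baireSpace_ainfSpace hΩo
  have : Nonempty (AinfSpace n Ω) := ⟨polyAinf Ω 0⟩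
  have hdense := dense_biInter_of_Gδ (fun C hC => (hcrit C hC).1) h𝒞count
    fun C hC => (hcrit C hC).2
  refine ⟨⋂ C ∈ 𝒞, {f | IsUniversalOn 𝕄 Nj ζ C f}, ?_, hdense.nonempty, hdense,
    .biInter h𝒞count fun C hC => (hcrit C hC).1⟩
  refine Subset.antisymm (fun f hf K hK hKc hdisj => ?_) fun f hf => mem_iInter₂.mpr fun C hC =>
    hf C (h𝒦 C hC.1).1 (h𝒦 C hC.1).2 hC.2.inter_eq
  obtain ⟨C, hC, hKC, hCΩ⟩ := hcofinal K (closure Ω)ᶜ hK hKc isClosed_closure.isOpen_compl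
    (disjoint_iff_inter_eq_empty.mpr hdisj).subset_compl_right
  exact (mem_iInter₂.mp hf C ⟨hC, disjoint_left.mpr hCΩ⟩).mono hKC

end
end
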